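/- arXiv:1910.10430 — 10 statements merged into one kernel-verified Lean document; each statement's English description precedes it below -/
import Mathlib

section
/- Let a be a real number with 0 < a < 1/2 or 1/2 < a < 1. Then the (analytically continued) periodic zeta function does not vanish at any real point: for every real σ, Li_σ(e^{2πia}) ≠ 0. -/
open HurwitzZeta Complex

lemma abs_sin_nat_le {x : ℝ} (hx : 0 ≤ Real.sin x) (n : ℕ) :
    |Real.sin (n * x)| ≤ n * Real.sin x := by
  induction n with
  | zero => simp
  | succ k ih =>
    push_cast
    rw [add_mul, one_mul, Real.sin_add]
    have h1 := Real.abs_cos_le_one x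
    have h2 := Real.abs_cos_le_one (k * x)
    calc |Real.sin (k * x) * Real.cos x + Real.cos (k * x) * Real.sin x|
        ≤ |Real.sin (k * x)| * |Real.cos x| + |Real.cos (k * x)| * |Real.sin x| := by
          rw [← abs_mul, ← abs_mul]; exact abs_add_le _ _
      _ ≤ |Real.sin (k * x)| * 1 + 1 * |Real.sin x| := by gcongr
      _ ≤ (k + 1) * Real.sin x := by rw [abs_of_nonneg hx]; linarith

/-- positivity for large `t`. -/
lemma sinKernel_pos_large {a : ℝ} (h0 : 0 < a) (h1 : a < 1 / 2) {t : ℝ} (ht : 1 / 4 ≤ t) :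
    0 < sinKernel (a : UnitAddCircle) t := by
  have hpi := Real.pi_gt_three
  have hs : 0 < Real.sin (2 * Real.pi * a) :=
    Real.sin_pos_of_pos_of_lt_pi (by positivity) (by nlinarith)
  have H := hasSum_nat_sinKernel a (t := t) (by linarith)
  set s := Real.sin (2 * Real.pi * a) with hsdef
  set E := Real.exp (-Real.pi * t) with hE
  have hEpos : 0 < E := Real.exp_pos _
  have H2 := (hasSum_nat_add_iff' 2).mpr H
  simp only [Finset.sum_range_succ, Finset.sum_range_zero] at H2
  have hg : HasSum (fun m : ℕ => -(2 * s * E) * ((1/2 : ℝ) * (1/2) ^ m)) (-(2 * s * E) * ((1/2 : ℝ) * 2)) :=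
    (hasSum_geometric_two.mul_left _).mul_left _
  have hexp : Real.exp (-(3 * Real.pi * t)) < 1 / 8 := by
    have : Real.exp (-(3 * Real.pi * t)) ≤ Real.exp (-(9/4)) := by
      apply Real.exp_le_exp.mpr; nlinarith
    have h2 : Real.exp (-(9/4)) = (Real.exp (9/4))⁻¹ := Real.exp_neg _
    have h3 : (8:ℝ) < Real.exp (9/4) := by
      have e1 : Real.exp (9/4) = Real.exp 1 ^ 2 * Real.exp (1/4) := by
        rw [← Real.exp_nat_mul, ← Real.exp_add]; norm_num
      have e2 := Real.exp_one_gt_d9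
      have e3 := Real.add_one_le_exp (1/4 : ℝ)
      rw [e1]
      nlinarith [mul_self_nonneg (Real.exp 1 - 2.7)]
    rw [h2] at this
    have h4 : (Real.exp (9/4))⁻¹ < 8⁻¹ := by gcongr
    linarith
  have key : ∀ m : ℕ, -(2 * s * E) * ((1/2 : ℝ) * (1/2) ^ m) < 2 * ((m + 2 : ℕ) : ℝ) * Real.sin (2 * Real.pi * a * ((m + 2 : ℕ) : ℝ)) * Real.exp (-Real.pi * ((m + 2 : ℕ) : ℝ) ^ 2 * t) := by
    intro m
    have b1 := abs_sin_nat_le hs.le (m + 2)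
    rw [mul_comm (((m + 2 : ℕ) : ℝ)) (2 * Real.pi * a)] at b1
    have b2 := (abs_le.mp b1).1
    have b3 : Real.exp (-Real.pi * ((m + 2 : ℕ) : ℝ) ^ 2 * t) ≤ E * Real.exp (-(3 * Real.pi * t)) ^ (m + 1) := by
      rw [← Real.exp_nat_mul, hE, ← Real.exp_add]
      apply Real.exp_le_exp.mpr
      push_cast
      have : 0 ≤ Real.pi * t * (m * (m + 1)) := by positivity
      nlinarith
    have b4 : (((m + 2 : ℕ) : ℝ)) ^ 2 ≤ 4 ^ (m + 1) := by
      have : ((m + 2 : ℕ) : ℝ) ≤ 2 ^ (m + 1) := by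
        exact_mod_cast (Nat.lt_two_pow_self : m + 1 < 2 ^ (m + 1))
      calc (((m + 2 : ℕ) : ℝ)) ^ 2 ≤ (2 ^ (m + 1)) ^ 2 := by gcongr
        _ = 4 ^ (m + 1) := by rw [← pow_mul, mul_comm, pow_mul]; norm_num
    have b5 : Real.exp (-(3 * Real.pi * t)) ^ (m + 1) < (1 / 8) ^ (m + 1) := by
      gcongr
    have b6 : (((m + 2 : ℕ) : ℝ)) ^ 2 * Real.exp (-Real.pi * ((m + 2 : ℕ) : ℝ) ^ 2 * t) < E * (1/2) ^ (m + 1) := by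
      calc _ ≤ 4 ^ (m + 1) * (E * Real.exp (-(3 * Real.pi * t)) ^ (m + 1)) := by gcongr
        _ < 4 ^ (m + 1) * (E * (1 / 8) ^ (m + 1)) := by gcongr
        _ = E * (4 * (1/8)) ^ (m + 1) := by rw [mul_pow]; ring
        _ = _ := by norm_num
    have b7 : 2 * ((m + 2 : ℕ) : ℝ) * (-(((m + 2 : ℕ) : ℝ) * s)) * Real.exp (-Real.pi * ((m + 2 : ℕ) : ℝ) ^ 2 * t) ≤ 2 * ((m + 2 : ℕ) : ℝ) * Real.sin (2 * Real.pi * a * ((m + 2 : ℕ) : ℝ)) * Real.exp (-Real.pi * ((m + 2 : ℕ) : ℝ) ^ 2 * t) := by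
      gcongr
    refine lt_of_lt_of_le ?_ b7
    rw [pow_succ (1/2 : ℝ) m] at b6
    nlinarith [mul_lt_mul_of_pos_left b6 hs]
  have := hasSum_lt (fun m => (key m).le) (key 0) hg H2
  have e1 : Real.sin (2 * Real.pi * a * ((1:ℕ):ℝ)) = s := by simp [hsdef]
  have e2 : Real.exp (-Real.pi * ((1:ℕ):ℝ) ^ 2 * t) = E := by simp [hE]
  rw [e1, e2] at this
  push_cast at this
  linarith

lemma pair_aux {u v x : ℝ} (hu : 1 / 4 ≤ u) (huv : u < v) (hx : 4 ≤ x) :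
    v * Real.exp (-Real.pi * v ^ 2 * x) < u * Real.exp (-Real.pi * u ^ 2 * x) := by
  have hpi := Real.pi_gt_three
  have hu0 : 0 < u := by linarith
  have h1 : v ≤ u * Real.exp ((v - u) / u) := by
    have := Real.add_one_le_exp ((v - u) / u)
    have h2 : v = u * ((v - u) / u + 1) := by field_simp; ring
    calc v = u * ((v - u) / u + 1) := h2
      _ ≤ _ := by gcongr
  have h3 : (v - u) / u < Real.pi * x * (v ^ 2 - u ^ 2) := by
    rw [div_lt_iff₀ hu0]
    have : 1 < Real.pi * x * (v + u) * u := by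
      have a1 : (12:ℝ) ≤ Real.pi * x := by nlinarith
      have a2 : 1/8 ≤ (v + u) * u := by nlinarith
      nlinarith
    nlinarith
  calc v * Real.exp (-Real.pi * v ^ 2 * x) ≤ u * Real.exp ((v - u) / u) * Real.exp (-Real.pi * v ^ 2 * x) := by gcongr
    _ < u * Real.exp (Real.pi * x * (v ^ 2 - u ^ 2)) * Real.exp (-Real.pi * v ^ 2 * x) := by gcongr
    _ = u * Real.exp (-Real.pi * u ^ 2 * x) := by
      rw [mul_assoc, ← Real.exp_add]; ring_nf

lemma oddKernel_pos_large {a : ℝ} (h0 : 0 < a) (h1 : a < 1 / 2) {x : ℝ} (hx : 4 ≤ x) :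
    0 < oddKernel (a : UnitAddCircle) x := by
  have hpi := Real.pi_gt_three
  have H := hasSum_int_oddKernel a (x := x) (by linarith)
  rcases le_or_gt (1 / 4) a with ha | ha
  · have H2 := H.nat_add_neg_add_one
    have key : ∀ n : ℕ, 0 < (((n : ℤ) : ℝ) + a) * Real.exp (-Real.pi * (((n : ℤ) : ℝ) + a) ^ 2 * x) + (((-((n : ℤ) + 1) : ℤ) : ℝ) + a) * Real.exp (-Real.pi * (((-((n : ℤ) + 1) : ℤ) : ℝ) + a) ^ 2 * x) := by
      intro n
      have := pair_aux (u := n + a) (v := n + 1 - a) (x := x) (by have : (0:ℝ) ≤ n := by positivity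
                                                                  linarith) (by linarith) hx
      push_cast
      have e : (-((n:ℝ) + 1) + a) ^ 2 = (n + 1 - a) ^ 2 := by ring
      rw [e]
      linarith
    exact hasSum_lt (fun n => (key n).le) (key 0) hasSum_zero H2
  · have H2 := H.nat_add_neg
    have H3 := (hasSum_nat_add_iff' 1).mpr H2
    simp only [Finset.sum_range_succ, Finset.sum_range_zero] at H3
    set E := Real.exp (-Real.pi * a ^ 2 * x) with hE
    have hEpos : 0 < E := Real.exp_pos _
    have e3 : Real.exp (-3) < 1 / 18 := by
      have e2 := Real.exp_one_gt_d9
      have : Real.exp 3 = Real.exp 1 ^ 3 := by rw [← Real.exp_nat_mul]; norm_num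
      have h18 : (18:ℝ) < Real.exp 3 := by
        rw [this]
        calc (18:ℝ) < 2.7 ^ 3 := by norm_num
          _ < _ := by gcongr; linarith
      rw [Real.exp_neg, one_div]; gcongr
    have hg : HasSum (fun m : ℕ => -(a * E) * (16 / 18 * (1/18) ^ m)) (-(a * E) * (16 / 18 * (1 - 1/18)⁻¹)) :=
      ((hasSum_geometric_of_lt_one (by norm_num) (by norm_num)).mul_left _).mul_left _
    have key : ∀ m : ℕ, -(a * E) * (16 / 18 * (1/18) ^ m) ≤ ((((m + 1 : ℕ) : ℤ) : ℝ) + a) * Real.exp (-Real.pi * ((((m + 1 : ℕ) : ℤ) : ℝ) + a) ^ 2 * x) + (((-((m + 1 : ℕ) : ℤ) : ℤ) : ℝ) + a) * Real.exp (-Real.pi * (((-((m + 1 : ℕ) : ℤ) : ℤ) : ℝ) + a) ^ 2 * x) := by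
      intro m
      push_cast
      have e : (-((m:ℝ) + 1) + a) ^ 2 = (m + 1 - a) ^ 2 := by ring
      rw [e]
      obtain ⟨n, hn⟩ : ∃ n : ℝ, n = m + 1 := ⟨_, rfl⟩
      have hn1 : 1 ≤ n := by rw [hn]; have : (0:ℝ) ≤ m := by positivity
                             linarith
      rw [← hn]
      have hz : 12 ≤ Real.pi * x := by nlinarith
      set y := Real.pi * x with hy
      set F := Real.exp (-Real.pi * (n - a) ^ 2 * x) with hF
      have hFpos : 0 < F := Real.exp_pos _
      have g1 : F * (1 - 4 * y * n * a) ≤ Real.exp (-Real.pi * (n + a) ^ 2 * x) := by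
        have : Real.exp (-Real.pi * (n + a) ^ 2 * x) = F * Real.exp (-(4 * y * n * a)) := by
          rw [hF, ← Real.exp_add, hy]; ring_nf
        rw [this]
        gcongr
        linarith [Real.add_one_le_exp (-(4 * y * n * a))]
      have g2 : F ≤ E * Real.exp (-(y * n ^ 2 / 2)) := by
        rw [hF, hE, ← Real.exp_add]
        apply Real.exp_le_exp.mpr
        have : 0 ≤ y * (n * (n / 2 - 2 * a)) := by
          have : 0 ≤ n / 2 - 2 * a := by linarith
          positivity
        rw [hy] at this ⊢
        nlinarith
      have g3 : y * n ^ 2 * Real.exp (-(y * n ^ 2 / 2)) ≤ 4 * Real.exp (-(y * n ^ 2 / 4)) := by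
        have h := Real.add_one_le_exp (y * n ^ 2 / 4)
        have : Real.exp (-(y * n ^ 2 / 4)) = Real.exp (y * n ^ 2 / 4) * Real.exp (-(y * n ^ 2 / 2)) := by
          rw [← Real.exp_add]; ring_nf
        rw [this, ← mul_assoc]
        exact mul_le_mul_of_nonneg_right (by linarith) (Real.exp_pos _).le
      have g4 : Real.exp (-(y * n ^ 2 / 4)) ≤ (1 / 18) ^ (m + 1) := by
        calc Real.exp (-(y * n ^ 2 / 4)) ≤ Real.exp (-3) ^ (m + 1) := by
              rw [← Real.exp_nat_mul]
              apply Real.exp_le_exp.mpr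
              push_cast
              rw [← hn]
              have : n ≤ n ^ 2 := by nlinarith
              nlinarith
          _ ≤ _ := by gcongr
      have g5 : (n + a) * (F * (1 - 4 * y * n * a)) ≤ (n + a) * Real.exp (-Real.pi * (n + a) ^ 2 * x) := by
        gcongr
      have g5' : (n - a) * (F * (1 - 4 * y * n * a)) ≤ (n - a) * Real.exp (-Real.pi * (n + a) ^ 2 * x) := by
        have : 0 ≤ n - a := by linarith
        gcongr
      have g6 : y * n ^ 2 * F ≤ E * (4 * (1/18) ^ (m+1)) := by
        calc y * n ^ 2 * F ≤ y * n ^ 2 * (E * Real.exp (-(y * n ^ 2 / 2))) := by gcongr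
          _ = E * (y * n ^ 2 * Real.exp (-(y * n ^ 2 / 2))) := by ring
          _ ≤ E * (4 * Real.exp (-(y * n ^ 2 / 4))) := by gcongr
          _ ≤ _ := by gcongr
      rw [pow_succ (1/18 : ℝ) m] at g6
      have g7 : -(4 * a * (y * n ^ 2 * F)) ≤ (n - a) * (F * (1 - 4 * y * n * a)) - (n - a) * F := by
        have : 0 ≤ 4 * y * n * a * a * F := by positivity
        nlinarith
      have g8 := mul_le_mul_of_nonneg_left g6 h0.le
      have g9 : 0 < Real.exp (-Real.pi * (n + a) ^ 2 * x) := Real.exp_pos _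
      have g10 := mul_pos h0 g9
      linarith
    have := hasSum_le key hg H3
    simp only [Nat.cast_zero, Int.cast_zero, neg_zero, zero_add] at this
    rw [← hE] at this
    have := mul_pos h0 hEpos
    norm_num at *
    linarith

lemma sinKernel_pos {a : ℝ} (h0 : 0 < a) (h1 : a < 1 / 2) {t : ℝ} (ht : 0 < t) :
    0 < sinKernel (a : UnitAddCircle) t := by
  rcases le_or_gt (1 / 4) t with h | h
  · exact sinKernel_pos_large h0 h1 h
  · have hx : 4 ≤ 1 / t := by rw [le_div_iff₀ ht]; linarith
    have := oddKernel_pos_large h0 h1 hx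
    rw [oddKernel_functional_equation, one_div_one_div] at this
    exact (pos_iff_pos_of_mul_pos this).mp (by positivity)

lemma completedSinZeta_ne_zero {a : ℝ} (h0 : 0 < a) (h1 : a < 1 / 2) (σ : ℝ) :
    completedSinZeta (a : UnitAddCircle) (σ : ℂ) ≠ 0 := by
  have hM := (isStrong_hurwitzOddFEPair (a : UnitAddCircle)).symm.hasMellin (((σ : ℂ) + 1) / 2)
  have hconv := hM.1
  have hval := hM.2
  have hf : (hurwitzOddFEPair (a : UnitAddCircle)).symm.f = ofReal ∘ sinKernel a := rfl
  rw [hf] at hconv hval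
  set r : ℝ := (σ + 1) / 2 - 1 with hr
  have hcongr : ∀ t ∈ Set.Ioi (0 : ℝ), (t : ℂ) ^ (((σ : ℂ) + 1) / 2 - 1) • (ofReal ∘ sinKernel a) t
      = ((t ^ r * sinKernel a t : ℝ) : ℂ) := by
    intro t ht
    rw [ofReal_mul, ofReal_cpow (le_of_lt ht), hr]
    push_cast
    rfl
  have hint : MeasureTheory.IntegrableOn (fun t : ℝ => t ^ r * sinKernel a t) (Set.Ioi 0) := by
    have h := (MeasureTheory.integrableOn_congr_fun hcongr measurableSet_Ioi).mp hconv
    have h' := h.re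
    simp only [RCLike.re_to_complex, ofReal_re] at h'
    exact h'
  have hpos : 0 < ∫ t in Set.Ioi (0 : ℝ), t ^ r * sinKernel a t := by
    have hp : ∀ t ∈ Set.Ioi (0 : ℝ), 0 < t ^ r * sinKernel a t := fun t ht =>
      mul_pos (Real.rpow_pos_of_pos ht _) (sinKernel_pos h0 h1 ht)
    rw [MeasureTheory.setIntegral_pos_iff_support_of_nonneg_ae ?_ hint]
    · have : Function.support (fun t : ℝ => t ^ r * sinKernel a t) ∩ Set.Ioi 0 = Set.Ioi 0 :=
        Set.inter_eq_right.mpr fun t ht => (hp t ht).ne'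
      rw [this]; simp
    · filter_upwards [MeasureTheory.ae_restrict_mem measurableSet_Ioi] with t ht
      exact (hp t ht).le
  rw [mellin, MeasureTheory.setIntegral_congr_fun measurableSet_Ioi hcongr, integral_complex_ofReal] at hval
  rw [completedSinZeta, ← hval]
  simpa using hpos.ne'

lemma real_of_series {f : ℂ → ℂ} (hf : Differentiable ℂ f) (c : ℕ → ℝ)
    (h : ∀ s : ℂ, 1 < s.re → HasSum (fun n : ℕ => (c n : ℂ) / (n : ℂ) ^ s) (f s)) (σ : ℝ) :
    (f σ).im = 0 := by
  have hg : Differentiable ℂ (fun s => (starRingEnd ℂ) (f ((starRingEnd ℂ) s))) := fun s =>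
    (differentiableAt_conj_conj_iff (f := f)).mpr (hf _)
  have heq : (fun s => (starRingEnd ℂ) (f ((starRingEnd ℂ) s))) = f := by
    refine AnalyticOnNhd.eq_of_eventuallyEq (z₀ := 2)
      (fun z _ => hg.analyticAt z) (fun z _ => hf.analyticAt z) ?_
    have : {s : ℂ | 1 < s.re} ∈ nhds (2 : ℂ) :=
      (isOpen_lt continuous_const continuous_re).mem_nhds (by simp)
    filter_upwards [this] with s hs
    have h1 := h ((starRingEnd ℂ) s) (by simpa using hs)
    have h3 := (h1.map (starRingEnd ℂ) continuous_conj)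
    refine h3.unique ((h s hs).congr_fun fun n => ?_)
    simp only [Function.comp, map_div₀, conj_ofReal]
    congr 1
    rw [cpow_conj _ _ (by rw [natCast_arg]; exact Real.pi_ne_zero.symm)]
    simp
  have := congrFun heq σ
  simp only [conj_ofReal] at this
  exact conj_eq_iff_im.mp this

lemma coe_ne_zero_aux {a : ℝ} (h0 : 0 < a) (h1 : a < 1 / 2) : (a : UnitAddCircle) ≠ 0 := by
  intro h
  rw [AddCircle.coe_eq_zero_iff_of_mem_Ico (p := (1:ℝ)) ⟨h0.le, by linarith⟩] at h
  exact h0.ne' h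

lemma cosZeta_neg_odd_ne_zero {a : ℝ} (h0 : 0 < a) (h1 : a < 1 / 2) (n : ℕ) :
    cosZeta (a : UnitAddCircle) (1 - (2 * (n + 1) : ℝ) : ℂ) ≠ 0 := by
  obtain ⟨x, hx⟩ : ∃ x : ℝ, x = 2 * (n + 1) := ⟨_, rfl⟩
  have hx1 : 1 < x := by rw [hx]; have : (0:ℝ) ≤ n := by positivity
                         linarith
  have hne : (1 : ℂ) - (x : ℂ) ≠ 0 := by
    rw [← ofReal_one, ← ofReal_sub]; exact ofReal_ne_zero.mpr (by linarith)
  rw [← hx, cosZeta, Function.update_of_ne hne, completedCosZeta_one_sub]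
  apply div_ne_zero
  · have hG : Gammaℝ (x : ℂ) ≠ 0 := Gammaℝ_ne_zero_of_re_pos (by simp; linarith)
    have H := hasSum_nat_hurwitzZetaEven_of_mem_Icc (a := a) ⟨h0.le, by linarith⟩ (s := x) (by simpa using hx1)
    have hz : hurwitzZetaEven (a : UnitAddCircle) x ≠ 0 := by
      have H2 : HasSum (fun n : ℕ => (1 / ((n : ℝ) + a) ^ x + 1 / ((n : ℝ) + 1 - a) ^ x) / 2) (hurwitzZetaEven (a : UnitAddCircle) x).re := by
        refine (hasSum_re H).congr_fun fun n => ?_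
        have hn : (0:ℝ) ≤ n := by positivity
        rw [← ofReal_re ((1 / ((n : ℝ) + a) ^ x + 1 / ((n : ℝ) + 1 - a) ^ x) / 2)]
        congr 1
        push_cast
        rw [ofReal_cpow (by linarith), ofReal_cpow (by linarith)]
        push_cast
        rfl
      have hp : ∀ n : ℕ, 0 < (1 / ((n : ℝ) + a) ^ x + 1 / ((n : ℝ) + 1 - a) ^ x) / 2 := by
        intro n
        have hn : (0:ℝ) ≤ n := by positivity
        have p1 : 0 < (n : ℝ) + a := by linarith
        have p2 : 0 < (n : ℝ) + 1 - a := by linarith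
        positivity
      have := hasSum_lt (fun n => (hp n).le) (hp 0) hasSum_zero H2
      intro h
      rw [h] at this
      simp at this
    rw [hurwitzZetaEven_def_of_ne_or_ne (Or.inl (coe_ne_zero_aux h0 h1))] at hz
    exact fun h => hz (by rw [h, zero_div])
  · rw [Ne, Gammaℝ_eq_zero_iff]
    rintro ⟨k, hk⟩
    have : (1 : ℝ) - x = -(2 * k) := by exact_mod_cast hk
    rw [hx] at this
    have : (2 * k + 1 : ℝ) = 2 * (n + 1) := by linarith
    have : 2 * k + 1 = 2 * (n + 1) := by exact_mod_cast this
    omega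

/-- Both real and imaginary parts cannot vanish. -/
lemma main_aux {a : ℝ} (h0 : 0 < a) (h1 : a < 1 / 2) (σ : ℝ) (ε : ℝ) (hε : ε ≠ 0) :
    cosZeta (a : UnitAddCircle) (σ : ℂ) + I * (ε * sinZeta (a : UnitAddCircle) (σ : ℂ)) ≠ 0 := by
  have hc : (cosZeta (a : UnitAddCircle) (σ : ℂ)).im = 0 :=
    real_of_series (differentiable_cosZeta_of_ne_zero (coe_ne_zero_aux h0 h1)) _
      (fun s hs => hasSum_nat_cosZeta a hs) σ
  have hs : (sinZeta (a : UnitAddCircle) (σ : ℂ)).im = 0 :=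
    real_of_series (differentiableAt_sinZeta _) _ (fun s hs => hasSum_nat_sinZeta a hs) σ
  intro h
  have hre := congrArg re h
  have him := congrArg im h
  simp [hc, hs, hε] at hre him
  have hs0 : sinZeta (a : UnitAddCircle) (σ : ℂ) = 0 := Complex.ext him hs
  have hc0 : cosZeta (a : UnitAddCircle) (σ : ℂ) = 0 := Complex.ext hre hc
  rw [sinZeta, div_eq_zero_iff] at hs0
  rcases hs0 with hs0 | hs0
  · exact completedSinZeta_ne_zero h0 h1 σ hs0
  · obtain ⟨n, hn⟩ := Gammaℝ_eq_zero_iff.mp hs0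
    apply cosZeta_neg_odd_ne_zero h0 h1 n
    rw [← hc0]
    congr 1
    push_cast
    linear_combination -hn

/-- For `0 < a < 1/2` or `1/2 < a < 1`, the (analytically continued)
periodic zeta function `Li_s(e^{2πia})` does not vanish at any real point. -/
theorem expZeta_ne_zero_of_real (a : ℝ)
    (ha : (0 < a ∧ a < 1 / 2) ∨ (1 / 2 < a ∧ a < 1)) (σ : ℝ) :
    expZeta (a : UnitAddCircle) (σ : ℂ) ≠ 0 := by
  rcases ha with ⟨h0, h1⟩ | ⟨h0, h1⟩
  · have := main_aux h0 h1 σ 1 one_ne_zero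
    simpa [expZeta] using this
  · have := main_aux (a := 1 - a) (by linarith) (by linarith) σ (-1) (by norm_num)
    have e : ((1 - a : ℝ) : UnitAddCircle) = -(a : UnitAddCircle) := by
      rw [AddCircle.coe_sub, AddCircle.coe_period, zero_sub]
    rw [e, cosZeta_neg, sinZeta_neg] at this
    simpa [expZeta] using this
end

section
/- Let 0 < a < 1/2. Then for each of the three entire functions F(s) = Y(s,a), F(s) = O(s,a), F(s) = X(s,a), a real number σ satisfies F(σ) = 0 if and only if σ is a negative odd integer, and every such zero is simple (the derivative F′(σ) is nonzero there). -/
open HurwitzZeta Complex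

/-- `Y(s,a) = ζ(s,a) − ζ(s,1−a)`. -/
noncomputable def Yf (a : ℝ) : ℂ → ℂ :=
  fun s => hurwitzZeta a s - hurwitzZeta (1 - a : ℝ) s

/-- `O(s,a) = −i(Li_s(e^{2πia}) − Li_s(e^{2πi(1−a)}))`. -/
noncomputable def Og (a : ℝ) : ℂ → ℂ :=
  fun s => -Complex.I * (expZeta a s - expZeta (1 - a : ℝ) s)

/-- `X(s,a) = Y(s,a) + O(s,a)`. -/
noncomputable def Xf (a : ℝ) : ℂ → ℂ :=
  fun s => Yf a s + Og a s


/-! ### Positivity of the kernels -/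

lemma aux_abs_sin_nat_mul (θ : ℝ) (hθ : 0 ≤ Real.sin θ) (n : ℕ) :
    |Real.sin (n * θ)| ≤ n * Real.sin θ := by
  induction n with
  | zero => simp
  | succ k ih =>
    have e : ((k + 1 : ℕ) : ℝ) * θ = k * θ + θ := by push_cast; ring
    rw [e, Real.sin_add]
    have h1 : |Real.sin (k * θ) * Real.cos θ| ≤ |Real.sin (k * θ)| := by
      rw [abs_mul]
      exact mul_le_of_le_one_right (abs_nonneg _) (Real.abs_cos_le_one _)
    have h2 : |Real.cos (k * θ) * Real.sin θ| ≤ Real.sin θ := by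
      rw [abs_mul, abs_of_nonneg hθ]
      exact mul_le_of_le_one_left hθ (Real.abs_cos_le_one _)
    calc _ ≤ |Real.sin (k * θ) * Real.cos θ| + |Real.cos (k * θ) * Real.sin θ| := abs_add_le _ _
      _ ≤ k * Real.sin θ + Real.sin θ := by linarith
      _ = _ := by push_cast; ring

lemma aux_sq_le (k : ℕ) : ((k : ℝ) + 1) ^ 2 ≤ 4 ^ k := by
  induction k with
  | zero => simp
  | succ m ih =>
    have hm : (0 : ℝ) ≤ m := Nat.cast_nonneg m
    rw [pow_succ (4 : ℝ) m]
    push_cast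
    nlinarith

lemma aux_exp_bound {y : ℝ} (hy : 12 ≤ y) : 400 * y ≤ 12 * Real.exp (y / 2) := by
  have h1 : (400 : ℝ) ≤ Real.exp 6 := by
    have := Real.exp_one_gt_d9
    have e : Real.exp 6 = Real.exp 1 ^ 6 := by rw [← Real.exp_nat_mul]; norm_num
    rw [e]
    calc (400 : ℝ) ≤ 2.7182818283 ^ 6 := by norm_num
      _ ≤ _ := by gcongr
  have h2 : y / 2 - 6 + 1 ≤ Real.exp (y / 2 - 6) := Real.add_one_le_exp _
  have e : Real.exp (y / 2) = Real.exp 6 * Real.exp (y / 2 - 6) := by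
    rw [← Real.exp_add]; congr 1; ring
  rw [e]
  have h3 : 400 * (y / 2 - 5) ≤ Real.exp 6 * Real.exp (y / 2 - 6) := by
    apply mul_le_mul h1 (by linarith) (by linarith) (by positivity)
  linarith

lemma aux_sinKernel_pos_large {a : ℝ} (ha₀ : 0 < a) (ha₁ : a < 1 / 2) {t : ℝ} (ht : 1 / 4 ≤ t) :
    0 < sinKernel a t := by
  have ht0 : 0 < t := by linarith
  have hpi := Real.pi_gt_three
  set S := Real.sin (2 * Real.pi * a) with hS
  have hSpos : 0 < S := by
    apply Real.sin_pos_of_pos_of_lt_pi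
    · positivity
    · nlinarith
  set r := Real.exp (-(3 * Real.pi * t)) with hr
  have hr0 : 0 < r := Real.exp_pos _
  have hr1 : r < 1 / 8 := by
    have h1 : Real.exp (-(3 * Real.pi * t)) ≤ Real.exp (-(9 / 4)) := by
      apply Real.exp_le_exp.mpr
      nlinarith
    have h2 : (8 : ℝ) < Real.exp (9 / 4) := by
      have := Real.exp_one_gt_d9
      have h8 : (8 : ℝ) ^ 4 < Real.exp (9 / 4) ^ 4 := by
        have e : Real.exp (9 / 4) ^ 4 = Real.exp 1 ^ 9 := by
          rw [← Real.exp_nat_mul, ← Real.exp_nat_mul]; norm_num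
        rw [e]
        calc (8 : ℝ) ^ 4 < 2.7182818283 ^ 9 := by norm_num
          _ ≤ _ := by gcongr
      exact lt_of_pow_lt_pow_left₀ 4 (by positivity) h8
    rw [Real.exp_neg (9 / 4)] at h1
    have h3 : (Real.exp (9 / 4))⁻¹ < 8⁻¹ := inv_strictAnti₀ (by norm_num) h2
    linarith
  set A := 2 * S * Real.exp (-Real.pi * t) with hA
  have hApos : 0 < A := by positivity
  have hsum := hasSum_nat_sinKernel a ht0
  rw [← hasSum_nat_add_iff' 1] at hsum
  simp only [Finset.range_one, Finset.sum_singleton, Nat.cast_zero, mul_zero, zero_mul,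
    sub_zero] at hsum
  have hgeo : HasSum (fun k : ℕ => A * (4 * r) ^ k) (A * (1 - 4 * r)⁻¹) :=
    (hasSum_geometric_of_lt_one (by positivity) (by linarith)).mul_left A
  have hg := (hasSum_ite_eq (0 : ℕ) (2 * A)).sub hgeo
  have hle := hasSum_le (fun k => ?_) hg hsum
  · have h1 : (1 - 4 * r)⁻¹ < 2 := by
      rw [inv_lt_comm₀ (by linarith) (by norm_num)]; linarith
    nlinarith
  · rcases Nat.eq_zero_or_pos k with rfl | hk
    · simp only [if_true, pow_zero, zero_add, Nat.cast_one, mul_one, one_pow]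
      rw [hA]
      apply le_of_eq
      ring
    · rw [if_neg hk.ne']
      have hk1 : (1 : ℝ) ≤ k := by exact_mod_cast hk
      have hs := aux_abs_sin_nat_mul (2 * Real.pi * a) hSpos.le (k + 1)
      rw [← hS, abs_le] at hs
      have hs1 := hs.1
      push_cast at hs1 ⊢
      rw [show 2 * Real.pi * a * ((k : ℝ) + 1) = (k + 1) * (2 * Real.pi * a) by ring]
      have he : Real.exp (-Real.pi * ((k : ℝ) + 1) ^ 2 * t) ≤ Real.exp (-Real.pi * t) * r ^ k := by
        rw [hr, ← Real.exp_nat_mul, ← Real.exp_add]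
        apply Real.exp_le_exp.mpr
        have : 0 ≤ Real.pi * t * (k * (k - 1)) :=
          mul_nonneg (by positivity) (mul_nonneg (by linarith) (by linarith))
        nlinarith
      have hq := aux_sq_le k
      have hb : ((k : ℝ) + 1) ^ 2 * Real.exp (-Real.pi * ((k : ℝ) + 1) ^ 2 * t) ≤
          4 ^ k * (Real.exp (-Real.pi * t) * r ^ k) :=
        mul_le_mul hq he (Real.exp_pos _).le (by positivity)
      have h3 : -(2 * S * (((k : ℝ) + 1) ^ 2 * Real.exp (-Real.pi * ((k : ℝ) + 1) ^ 2 * t))) ≤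
          2 * ((k : ℝ) + 1) * Real.sin ((k + 1) * (2 * Real.pi * a)) *
            Real.exp (-Real.pi * ((k : ℝ) + 1) ^ 2 * t) := by
        have hE := Real.exp_pos (-Real.pi * ((k : ℝ) + 1) ^ 2 * t)
        set E := Real.exp (-Real.pi * ((k : ℝ) + 1) ^ 2 * t)
        have : 0 ≤ 2 * ((k : ℝ) + 1) * E := by positivity
        nlinarith [mul_le_mul_of_nonneg_left hs1 this]
      refine le_trans ?_ h3
      rw [hA, mul_pow]
      nlinarith [mul_le_mul_of_nonneg_left hb (by positivity : 0 ≤ 2 * S)]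

lemma aux_oddKernel_pos_large₁ {a : ℝ} (ha₀ : 1 / 4 ≤ a) (ha₁ : a < 1 / 2) {x : ℝ} (hx : 4 ≤ x) :
    0 < oddKernel a x := by
  have hx0 : 0 < x := by linarith
  have hpi := Real.pi_gt_three
  have hsum := (hasSum_int_oddKernel a hx0).nat_add_neg_add_one
  have hpos : ∀ n : ℕ, 0 < (((n : ℤ) : ℝ) + a) * Real.exp (-Real.pi * (((n : ℤ) : ℝ) + a) ^ 2 * x) +
      (((-((n : ℤ) + 1) : ℤ) : ℝ) + a) *
        Real.exp (-Real.pi * (((-((n : ℤ) + 1) : ℤ) : ℝ) + a) ^ 2 * x) := by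
    intro n
    push_cast
    have hn : (0 : ℝ) ≤ n := Nat.cast_nonneg n
    set E := Real.exp (-Real.pi * (-((n : ℝ) + 1) + a) ^ 2 * x) with hE
    have hEpos : 0 < E := Real.exp_pos _
    set w := Real.pi * x * ((2 * n + 1) * (1 - 2 * a)) with hw
    have e : Real.exp (-Real.pi * ((n : ℝ) + a) ^ 2 * x) = E * Real.exp w := by
      rw [hE, ← Real.exp_add]; congr 1; rw [hw]; ring
    rw [e]
    have hu : 0 < 1 - 2 * a := by linarith
    have hy : 12 ≤ Real.pi * x := by nlinarith
    have hw12 : 12 * (1 - 2 * a) ≤ w := by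
      rw [hw]
      apply mul_le_mul hy _ hu.le (by linarith)
      nlinarith
    have hex := Real.add_one_le_exp w
    have h1 : 0 < (n + a) * Real.exp w - (n + 1 - a) := by
      have : (n + a) * (12 * (1 - 2 * a) + 1) ≤ (n + a) * Real.exp w :=
        mul_le_mul_of_nonneg_left (by linarith) (by linarith)
      nlinarith [mul_nonneg hn hu.le]
    nlinarith [mul_pos hEpos h1]
  exact hasSum_lt (i := 0) (fun n => (hpos n).le) (hpos 0) hasSum_zero hsum

lemma aux_oddKernel_pos_large₂ {a : ℝ} (ha₀ : 0 < a) (ha₁ : a ≤ 1 / 4) {x : ℝ} (hx : 4 ≤ x) :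
    0 < oddKernel a x := by
  have hx0 : 0 < x := by linarith
  have hpi := Real.pi_gt_three
  have hsum := (hasSum_int_oddKernel a hx0).nat_add_neg
  set y := Real.pi * x with hy
  have hy12 : 12 ≤ y := by nlinarith
  set q := Real.exp (-(y / 2)) with hq
  have hq0 : 0 < q := Real.exp_pos _
  have hyq : y * q ≤ 3 / 100 := by
    have h := aux_exp_bound hy12
    have : Real.exp (y / 2) * q = 1 := by rw [hq, ← Real.exp_add]; simp
    nlinarith
  have hq1 : q ≤ 1 / 400 := by nlinarith
  set B := a * Real.exp (-(y * a ^ 2)) with hB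
  have hB0 : 0 < B := by positivity
  have hgeo : HasSum (fun k : ℕ => B * y * (4 * q) ^ k) (B * y * (1 - 4 * q)⁻¹) :=
    (hasSum_geometric_of_lt_one (by positivity) (by linarith)).mul_left _
  have hg := (hasSum_ite_eq (0 : ℕ) (2 * B + B * y)).sub hgeo
  have hf0 : (((0 : ℤ) : ℝ) + a) * Real.exp (-Real.pi * (((0 : ℤ) : ℝ) + a) ^ 2 * x) = B := by
    rw [hB, hy]; simp only [Int.cast_zero, zero_add]; congr 2; ring
  have hle := hasSum_le (fun n => ?_) hg hsum
  · rw [hf0] at hle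
    have h1 : y * (1 - 4 * q)⁻¹ < 1 + y := by
      rw [← div_eq_mul_inv, div_lt_iff₀ (by linarith)]
      nlinarith
    nlinarith [mul_lt_mul_of_pos_left h1 hB0]
  · rcases Nat.eq_zero_or_pos n with rfl | hn
    · simp only [if_true, pow_zero, Nat.cast_zero, neg_zero]
      rw [hf0]; linarith
    · rw [if_neg hn.ne']
      have hn1 : (1 : ℝ) ≤ n := by exact_mod_cast hn
      push_cast
      set E := Real.exp (-Real.pi * (-(n : ℝ) + a) ^ 2 * x) with hE
      have hEpos : 0 < E := Real.exp_pos _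
      set w := 4 * y * n * a with hw
      have e : Real.exp (-Real.pi * ((n : ℝ) + a) ^ 2 * x) = E * Real.exp (-w) := by
        rw [hE, ← Real.exp_add]; congr 1; rw [hw, hy]; ring
      rw [e]
      have hex := Real.add_one_le_exp (-w)
      have hex0 := Real.exp_pos (-w)
      -- lower bound by `-n * E * w`
      have h1 : -(n * E * w) ≤ (n + a) * (E * Real.exp (-w)) + (-(n : ℝ) + a) * E := by
        have h2 : (n : ℝ) * E * (1 - w) ≤ n * E * Real.exp (-w) :=
          mul_le_mul_of_nonneg_left (by linarith) (by positivity)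
        have h3 : 0 ≤ a * (E * Real.exp (-w)) := by positivity
        have h4 : 0 ≤ a * E := by positivity
        nlinarith
      refine le_trans ?_ h1
      have hEle : E ≤ Real.exp (-(y * a ^ 2)) * q ^ n := by
        rw [hE, hq, ← Real.exp_nat_mul, ← Real.exp_add]
        apply Real.exp_le_exp.mpr
        have h5 : 0 ≤ y * (n * (n - 1 / 2 - 2 * a)) := by
          apply mul_nonneg (by linarith) (mul_nonneg (by linarith) (by linarith))
        rw [show -Real.pi * (-(n : ℝ) + a) ^ 2 * x = - y * (-(n : ℝ) + a) ^ 2 by rw [hy]; ring]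
        nlinarith
      have hsq : (n : ℝ) ^ 2 * 4 ≤ 4 ^ n := by
        obtain ⟨m, rfl⟩ := Nat.exists_eq_add_of_lt hn
        have := aux_sq_le m
        rw [show 0 + m + 1 = m + 1 by ring, pow_succ (4 : ℝ) m]
        push_cast
        nlinarith
      have h6 : (n : ℝ) ^ 2 * 4 * E ≤ 4 ^ n * (Real.exp (-(y * a ^ 2)) * q ^ n) :=
        mul_le_mul hsq hEle hEpos.le (by positivity)
      have h7 := mul_le_mul_of_nonneg_left h6 (by positivity : 0 ≤ a * y)
      rw [hB, hw, mul_pow]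
      nlinarith

lemma aux_oddKernel_pos_large {a : ℝ} (ha₀ : 0 < a) (ha₁ : a < 1 / 2) {x : ℝ} (hx : 4 ≤ x) :
    0 < oddKernel a x := by
  rcases le_total a (1 / 4) with h | h
  · exact aux_oddKernel_pos_large₂ ha₀ h hx
  · exact aux_oddKernel_pos_large₁ h ha₁ hx

lemma aux_oddKernel_pos {a : ℝ} (ha₀ : 0 < a) (ha₁ : a < 1 / 2) {x : ℝ} (hx : 0 < x) :
    0 < oddKernel a x := by
  rcases le_total 4 x with h | h
  · exact aux_oddKernel_pos_large ha₀ ha₁ h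
  · rw [oddKernel_functional_equation]
    have h1 : 1 / 4 ≤ 1 / x := one_div_le_one_div_of_le hx h
    have := aux_sinKernel_pos_large ha₀ ha₁ h1
    positivity

lemma aux_sinKernel_pos {a : ℝ} (ha₀ : 0 < a) (ha₁ : a < 1 / 2) {x : ℝ} (hx : 0 < x) :
    0 < sinKernel a x := by
  have h := aux_oddKernel_pos ha₀ ha₁ (one_div_pos.mpr hx)
  rw [oddKernel_functional_equation, one_div_one_div] at h
  exact pos_of_mul_pos_right h (by positivity)

/-! ### Positivity of the completed functions on the real line -/

lemma aux_mellin_pos {f : ℝ → ℝ} (hf : ∀ t, 0 < t → 0 < f t) (u : ℝ)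
    (hc : MellinConvergent (ofReal ∘ f) (u : ℂ)) :
    ∃ c : ℝ, 0 < c ∧ mellin (ofReal ∘ f) (u : ℂ) = c := by
  have heq : Set.EqOn (fun t : ℝ => (t : ℂ) ^ ((u : ℂ) - 1) • (ofReal ∘ f) t)
      (fun t : ℝ => ((t ^ (u - 1) * f t : ℝ) : ℂ)) (Set.Ioi 0) := by
    intro t ht
    have ht0 : (0 : ℝ) < t := ht
    simp only [Function.comp, smul_eq_mul]
    rw [ofReal_mul, ofReal_cpow ht0.le]
    push_cast
    rfl
  have hint : MeasureTheory.IntegrableOn (fun t : ℝ => t ^ (u - 1) * f t) (Set.Ioi 0) := by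
    have h1 := (MeasureTheory.integrableOn_congr_fun heq measurableSet_Ioi).mp hc
    exact h1.re
  refine ⟨∫ t in Set.Ioi (0 : ℝ), t ^ (u - 1) * f t, ?_, ?_⟩
  · have hpos : ∀ t ∈ Set.Ioi (0 : ℝ), 0 < t ^ (u - 1) * f t := fun t ht =>
      mul_pos (Real.rpow_pos_of_pos ht _) (hf t ht)
    rw [MeasureTheory.setIntegral_pos_iff_support_of_nonneg_ae _ hint]
    · have : Set.Ioi (0 : ℝ) ⊆
          Function.support (fun t : ℝ => t ^ (u - 1) * f t) ∩ Set.Ioi 0 :=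
        fun t ht => ⟨(hpos t ht).ne', ht⟩
      refine lt_of_lt_of_le ?_ (MeasureTheory.measure_mono this)
      simp
    · exact (MeasureTheory.ae_restrict_iff' measurableSet_Ioi).mpr
        (Filter.Eventually.of_forall fun t ht => (hpos t ht).le)
  · rw [mellin, MeasureTheory.setIntegral_congr_fun measurableSet_Ioi heq]
    exact integral_ofReal

lemma aux_completedHurwitz_pos {a : ℝ} (ha₀ : 0 < a) (ha₁ : a < 1 / 2) (σ : ℝ) :
    ∃ c : ℝ, 0 < c ∧ completedHurwitzZetaOdd a (σ : ℂ) = c := by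
  have hM := (isStrong_hurwitzOddFEPair (a : UnitAddCircle)).hasMellin (((σ + 1) / 2 : ℝ) : ℂ)
  obtain ⟨c, hc, h⟩ := aux_mellin_pos (fun t ht => aux_oddKernel_pos ha₀ ha₁ ht)
    ((σ + 1) / 2) hM.1
  refine ⟨c / 2, by positivity, ?_⟩
  have h2 := hM.2
  replace h2 := h.symm.trans h2
  rw [completedHurwitzZetaOdd]
  push_cast at h2 ⊢
  rw [← h2]

lemma aux_completedSin_pos {a : ℝ} (ha₀ : 0 < a) (ha₁ : a < 1 / 2) (σ : ℝ) :
    ∃ c : ℝ, 0 < c ∧ completedSinZeta a (σ : ℂ) = c := by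
  obtain ⟨c, hc, h⟩ := aux_completedHurwitz_pos ha₀ ha₁ (1 - σ)
  refine ⟨c, hc, ?_⟩
  rw [← completedHurwitzZetaOdd_one_sub, ← h]
  push_cast
  rfl

/-! ### Zeros of the archimedean factor -/

lemma aux_inv_Gammaℝ {s : ℂ} (hs : s.re < 1) :
    (Gammaℝ (s + 1))⁻¹ = Gammaℝ (1 - s) * Complex.cos (Real.pi * s / 2) := by
  have h := Gammaℝ_one_sub_mul_Gammaℝ_one_add s
  have h1 : Gammaℝ (1 - s) ≠ 0 := Gammaℝ_ne_zero_of_re_pos (by simpa using hs)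
  rw [add_comm s 1, ← inv_inv (Complex.cos (Real.pi * s / 2)), ← h, mul_inv,
    mul_inv_cancel_left₀ h1]

lemma aux_main (C : ℂ → ℂ) (hC : Differentiable ℂ C) (hpos : ∀ σ : ℝ, C σ ≠ 0)
    (F : ℂ → ℂ) (hF : ∀ s, F s = C s * (Gammaℝ (s + 1))⁻¹) (σ : ℝ) :
    (F (σ : ℂ) = 0 ↔ ∃ n : ℕ, σ = -(2 * n + 1)) ∧
      (F (σ : ℂ) = 0 → deriv F (σ : ℂ) ≠ 0) := by
  have hiff : F (σ : ℂ) = 0 ↔ ∃ n : ℕ, σ = -(2 * n + 1) := by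
    rw [hF, mul_eq_zero, or_iff_right (hpos σ), inv_eq_zero, Gammaℝ_eq_zero_iff]
    refine exists_congr fun n => ?_
    rw [← ofReal_inj]
    push_cast
    constructor <;> intro h <;> linear_combination h
  refine ⟨hiff, fun h0 => ?_⟩
  obtain ⟨n, hn⟩ := hiff.mp h0
  have hσ : (σ : ℂ).re < 1 := by
    have : (0 : ℝ) ≤ n := Nat.cast_nonneg n
    rw [ofReal_re, hn]; linarith
  set H : ℂ → ℂ := fun s => (Gammaℝ (s + 1))⁻¹ with hH
  have hHd : Differentiable ℂ H :=
    differentiable_Gammaℝ_inv.comp (differentiable_id.add (differentiable_const _))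
  have hH0 : H σ = 0 := by
    have := h0
    rw [hF, mul_eq_zero, or_iff_right (hpos σ)] at this
    exact this
  have hFe : F = fun s => C s * H s := funext hF
  rw [hFe, deriv_fun_mul (hC _) (hHd _), hH0, mul_zero, zero_add]
  refine mul_ne_zero (hpos σ) ?_
  -- the derivative of `H`
  have hev : H =ᶠ[nhds (σ : ℂ)] fun s => Gammaℝ (1 - s) * Complex.cos (Real.pi * s / 2) := by
    filter_upwards [(isOpen_lt continuous_re continuous_const).mem_nhds hσ] with s hs
    exact aux_inv_Gammaℝ hs
  rw [hev.deriv_eq]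
  have hG0 : Gammaℝ (1 - σ) ≠ 0 := Gammaℝ_ne_zero_of_re_pos (by simpa using hσ)
  have hcos0 : Complex.cos (Real.pi * σ / 2) = 0 := by
    have := hev.eq_of_nhds
    rw [hH0] at this
    exact (mul_eq_zero.mp this.symm).resolve_left hG0
  have hGd : DifferentiableAt ℂ (fun s : ℂ => Gammaℝ (1 - s)) σ := by
    have h1 : DifferentiableAt ℂ (fun s : ℂ => ((Gammaℝ (1 - s))⁻¹)⁻¹) σ := by
      apply DifferentiableAt.inv
      · exact (differentiable_Gammaℝ_inv.comp
          ((differentiable_const (1 : ℂ)).sub differentiable_id)) _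
      · exact inv_ne_zero hG0
    simpa only [inv_inv] using h1
  have hcd : HasDerivAt (fun s : ℂ => Complex.cos (Real.pi * s / 2))
      (-Complex.sin (Real.pi * σ / 2) * (Real.pi / 2)) (σ : ℂ) := by
    have h1 : HasDerivAt (fun s : ℂ => (Real.pi : ℂ) * s / 2) (Real.pi / 2 : ℂ) (σ : ℂ) := by
      simpa using ((hasDerivAt_id (σ : ℂ)).const_mul (Real.pi : ℂ)).div_const 2
    exact h1.ccos
  rw [deriv_fun_mul hGd hcd.differentiableAt, hcd.deriv, hcos0, mul_zero, zero_add]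
  have hsin : Complex.sin (Real.pi * σ / 2) ≠ 0 := by
    intro h
    have := Complex.sin_sq_add_cos_sq (Real.pi * σ / 2)
    rw [h, hcos0] at this
    simp at this
  have hpi : (Real.pi : ℂ) ≠ 0 := ofReal_ne_zero.mpr Real.pi_ne_zero
  exact mul_ne_zero hG0 (mul_ne_zero (neg_ne_zero.mpr hsin) (div_ne_zero hpi two_ne_zero))

lemma aux_coe_one_sub (a : ℝ) : (((1 - a : ℝ)) : UnitAddCircle) = -(a : UnitAddCircle) := by
  rw [AddCircle.coe_sub, AddCircle.coe_period, zero_sub]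

lemma aux_Yf (a : ℝ) (s : ℂ) :
    Yf a s = (2 * completedHurwitzZetaOdd a s) * (Gammaℝ (s + 1))⁻¹ := by
  have h := hurwitzZetaOdd_eq (a : UnitAddCircle) s
  rw [hurwitzZetaOdd] at h
  simp only [Yf]
  rw [aux_coe_one_sub]
  linear_combination -2 * h

lemma aux_Og (a : ℝ) (s : ℂ) :
    Og a s = (2 * completedSinZeta a s) * (Gammaℝ (s + 1))⁻¹ := by
  have h : sinZeta a s = completedSinZeta a s * (Gammaℝ (s + 1))⁻¹ := rfl
  simp only [Og]
  rw [aux_coe_one_sub, expZeta, expZeta, cosZeta_neg, sinZeta_neg, mul_assoc, ← h]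
  linear_combination (-2 * sinZeta a s) * I_sq

/-- For `0 < a < 1/2`, each of `Y(·,a)`, `O(·,a)`, `X(·,a)` vanishes at a real
point `σ` iff `σ` is a negative odd integer, and each such zero is simple. -/
theorem real_zeros_Y_O_X (a : ℝ) (ha₀ : 0 < a) (ha₁ : a < 1 / 2) :
    ∀ F ∈ ({Yf a, Og a, Xf a} : Set (ℂ → ℂ)), ∀ σ : ℝ,
      (F (σ : ℂ) = 0 ↔ ∃ n : ℕ, σ = -(2 * n + 1)) ∧
      (F (σ : ℂ) = 0 → deriv F (σ : ℂ) ≠ 0) := by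
  have hdH := differentiable_completedHurwitzZetaOdd (a : UnitAddCircle)
  have hdS := differentiable_completedSinZeta (a : UnitAddCircle)
  intro F hF σ
  simp only [Set.mem_insert_iff, Set.mem_singleton_iff] at hF
  rcases hF with rfl | rfl | rfl
  · refine aux_main (fun s => 2 * completedHurwitzZetaOdd a s) (hdH.const_mul 2) (fun τ => ?_)
      _ (aux_Yf a) σ
    obtain ⟨c, hc, h⟩ := aux_completedHurwitz_pos ha₀ ha₁ τ
    simp only [h]
    exact mul_ne_zero two_ne_zero (ofReal_ne_zero.mpr hc.ne')
  · refine aux_main (fun s => 2 * completedSinZeta a s) (hdS.const_mul 2) (fun τ => ?_)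
      _ (aux_Og a) σ
    obtain ⟨c, hc, h⟩ := aux_completedSin_pos ha₀ ha₁ τ
    simp only [h]
    exact mul_ne_zero two_ne_zero (ofReal_ne_zero.mpr hc.ne')
  · refine aux_main (fun s => 2 * completedHurwitzZetaOdd a s + 2 * completedSinZeta a s)
      ((hdH.const_mul 2).add (hdS.const_mul 2)) (fun τ => ?_) _ (fun s => ?_) σ
    · obtain ⟨c, hc, h⟩ := aux_completedHurwitz_pos ha₀ ha₁ τ
      obtain ⟨d, hd, h'⟩ := aux_completedSin_pos ha₀ ha₁ τ
      simp only [h, h']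
      have : (2 * c + 2 * d : ℝ) ≠ 0 := by positivity
      exact_mod_cast this
    · rw [Xf, aux_Yf, aux_Og, add_mul]
end

section
/- Let 0 < a ≤ 1/2. Then the following are equivalent: (i) 1/4 ≤ a ≤ 1/2; (ii) for every real σ ≠ 1, Z(σ,a) = 0 if and only if σ is a non-positive even integer (σ ∈ {0, −2, −4, …}), and each of these zeros is simple (the derivative of s ↦ Z(s,a) is nonzero there). -/
open HurwitzZeta Complex

/-- `Z(s,a) = ζ(s,a) + ζ(s,1−a)`. -/
noncomputable def Zf (a : ℝ) : ℂ → ℂ :=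
  fun s => hurwitzZeta a s + hurwitzZeta (1 - a : ℝ) s

open Filter Topology MeasureTheory Set Asymptotics

/-- The kernel whose Mellin transform is `Γ(s) * cosZeta a s`. -/
noncomputable def gker (c t : ℝ) : ℝ :=
  (c * Real.exp (-t) - Real.exp (-t) ^ 2) / (1 - 2 * c * Real.exp (-t) + Real.exp (-t) ^ 2)

lemma gker_den_pos {c : ℝ} (hc : c < 1 ∧ -1 ≤ c) {y : ℝ} (hy : 0 ≤ y) :
    (1 - c) / 2 ≤ 1 - 2 * c * y + y ^ 2 := by
  obtain ⟨h1, h2⟩ := hc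
  rcases le_total 0 c with h | h
  · nlinarith [sq_nonneg (y - c)]
  · nlinarith [mul_nonneg (neg_nonneg.mpr h) hy]

lemma gker_continuous {c : ℝ} (hc : c < 1 ∧ -1 ≤ c) : Continuous (gker c) := by
  unfold gker
  refine Continuous.div (by fun_prop) (by fun_prop) (fun t => ?_)
  have := gker_den_pos hc (Real.exp_pos (-t)).le
  linarith [hc.1]

lemma gker_bound {c : ℝ} (hc : c < 1 ∧ -1 ≤ c) {t : ℝ} (ht : 0 < t) :
    |gker c t| ≤ 2 / ((1 - c) / 2) * Real.exp (-t) := by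
  have h := gker_den_pos hc (Real.exp_pos (-t)).le
  have hy := Real.exp_pos (-t)
  have hy1 : Real.exp (-t) < 1 := Real.exp_lt_one_iff.mpr (by linarith)
  have hpos : 0 < (1 - c) / 2 := by linarith [hc.1]
  unfold gker
  rw [abs_div, abs_of_pos (lt_of_lt_of_le hpos h), div_mul_eq_mul_div]
  apply div_le_div₀ (by positivity) _ hpos h
  obtain ⟨hc1, hc2⟩ := hc
  rw [abs_le]
  constructor <;> nlinarith

lemma gker_mellin_props {c : ℝ} (hc : c < 1 ∧ -1 ≤ c) {s : ℂ} (hs : 0 < s.re) :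
    MellinConvergent (fun t => (gker c t : ℂ)) s ∧
    DifferentiableAt ℂ (mellin (fun t => (gker c t : ℂ))) s := by
  have hpos : 0 < (1 - c) / 2 := by linarith [hc.1]
  have h1 : LocallyIntegrableOn (fun t => (gker c t : ℂ)) (Ioi 0) :=
    (Complex.continuous_ofReal.comp (gker_continuous hc)).locallyIntegrable.locallyIntegrableOn _
  have h2 : (fun t => (gker c t : ℂ)) =O[atTop] fun t => Real.exp (-1 * t) := by
    refine IsBigO.of_bound (2 / ((1 - c) / 2)) ?_
    filter_upwards [eventually_gt_atTop 0] with t ht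
    simpa using gker_bound hc ht
  have h3 : (fun t => (gker c t : ℂ)) =O[𝓝[>] 0] fun t : ℝ => t ^ (-(0:ℝ)) := by
    refine IsBigO.of_bound (2 / ((1 - c) / 2)) ?_
    filter_upwards [self_mem_nhdsWithin] with t ht
    have := gker_bound hc ht
    have h4 : Real.exp (-t) ≤ 1 := (Real.exp_lt_one_iff.mpr (by simpa using ht)).le
    have h5 : 2 / ((1 - c) / 2) * Real.exp (-t) ≤ 2 / ((1 - c) / 2) * 1 := by gcongr
    simp only [neg_zero, Real.rpow_zero, norm_one, Complex.norm_real, Real.norm_eq_abs]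
    linarith
  exact ⟨mellinConvergent_of_isBigO_rpow_exp one_pos h1 h2 h3 hs,
    mellin_differentiableAt_of_isBigO_rpow_exp one_pos h1 h2 h3 hs⟩

lemma gker_hasSum (θ : ℝ) {t : ℝ} (ht : 0 < t) :
    HasSum (fun n : ℕ => Real.cos (θ * (n + 1)) * Real.exp (-(n + 1) * t))
      (gker (Real.cos θ) t) := by
  have hy := Real.exp_pos (-t)
  have hy1 : Real.exp (-t) < 1 := Real.exp_lt_one_iff.mpr (by linarith)
  set z : ℂ := (Real.exp (-t) : ℂ) * cexp (θ * I) with hz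
  have hzn : ‖z‖ < 1 := by
    rw [hz, norm_mul, Complex.norm_exp_ofReal_mul_I, Complex.norm_real, Real.norm_eq_abs,
      abs_of_pos hy]
    linarith
  have h := Complex.hasSum_re ((hasSum_geometric_of_norm_lt_one hzn).mul_left z)
  have hre : z.re = Real.exp (-t) * Real.cos θ := by
    rw [hz, re_ofReal_mul, Complex.exp_ofReal_mul_I_re]
  have him : z.im = Real.exp (-t) * Real.sin θ := by
    rw [hz, im_ofReal_mul, Complex.exp_ofReal_mul_I_im]
  convert h using 1
  · ext n
    rw [← pow_succ', hz, mul_pow, ← Complex.exp_nat_mul, ← Complex.ofReal_pow, re_ofReal_mul,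
      ← Real.exp_nat_mul]
    rw [show ((n + 1 : ℕ) : ℂ) * (θ * I) = ((θ * (n + 1) : ℝ) : ℂ) * I by push_cast; ring,
      Complex.exp_ofReal_mul_I_re, mul_comm]
    push_cast
    congr 2
    ring
  · have hcs := Real.sin_sq_add_cos_sq θ
    rw [Complex.mul_re, Complex.inv_re, Complex.inv_im, Complex.normSq_apply]
    simp only [Complex.sub_re, Complex.sub_im, one_re, one_im, hre, him]
    unfold gker
    set y := Real.exp (-t)
    have hden : (1 - y * Real.cos θ) * (1 - y * Real.cos θ) +
        (0 - y * Real.sin θ) * (0 - y * Real.sin θ) = 1 - 2 * Real.cos θ * y + y ^ 2 := by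
      linear_combination y ^ 2 * hcs
    rw [hden, mul_div_assoc', mul_div_assoc', ← sub_div]
    congr 1
    linear_combination (y ^ 2) * hcs

lemma cos_bounds {a : ℝ} (ha₀ : 0 < a) (ha₁ : a ≤ 1 / 2) :
    Real.cos (2 * Real.pi * a) < 1 ∧ -1 ≤ Real.cos (2 * Real.pi * a) := by
  refine ⟨?_, Real.neg_one_le_cos _⟩
  rw [← Real.cos_zero]
  apply Real.cos_lt_cos_of_nonneg_of_le_pi le_rfl
  · nlinarith [Real.pi_pos]
  · positivity

lemma circle_ne_zero {a : ℝ} (ha₀ : 0 < a) (ha₁ : a ≤ 1 / 2) : (a : UnitAddCircle) ≠ 0 := by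
  intro h
  rw [AddCircle.coe_eq_zero_iff_of_mem_Ico] at h
  · linarith
  · constructor <;> linarith

/-- Mellin representation of `cosZeta` in the region of absolute convergence. -/
lemma mellin_gker_of_one_lt (a : ℝ) {s : ℂ} (hs : 1 < s.re) :
    mellin (fun t => (gker (Real.cos (2 * Real.pi * a)) t : ℂ)) s = Gamma s * cosZeta a s := by
  have hsum := hasSum_nat_cosZeta a hs
  rw [← hasSum_nat_add_iff' 1] at hsum
  have hs0 : s ≠ 0 := by rintro rfl; simp at hs; linarith
  simp only [Finset.range_one, Finset.sum_singleton, Nat.cast_zero, Complex.zero_cpow hs0,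
    div_zero, sub_zero] at hsum
  have h1 := hasSum_mellin (a := fun n : ℕ => ((Real.cos (2 * Real.pi * a * (n + 1)) : ℝ) : ℂ))
    (p := fun n : ℕ => (n : ℝ) + 1)
    (F := fun t => (gker (Real.cos (2 * Real.pi * a)) t : ℂ)) (s := s)
    (fun i => Or.inr (by positivity)) (by linarith) ?_ ?_
  · refine h1.unique ((hsum.mul_left (Gamma s)).congr_fun fun n => ?_)
    push_cast
    ring
  · intro t ht
    have := gker_hasSum (2 * Real.pi * a) ht
    rw [← Complex.hasSum_ofReal] at this
    simpa using this
  · have h2 : Summable fun n : ℕ => 1 / ((n : ℝ) + 1) ^ s.re := by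
      have := (summable_nat_add_iff 1).mpr (Real.summable_one_div_nat_rpow.mpr hs)
      simpa using this
    refine Summable.of_nonneg_of_le (fun n => by positivity) (fun n => ?_) h2
    rw [Complex.norm_real]
    gcongr
    exact Real.abs_cos_le_one _

lemma mellin_gker {a : ℝ} (ha₀ : 0 < a) (ha₁ : a ≤ 1 / 2) {s : ℂ} (hs : 0 < s.re) :
    mellin (fun t => (gker (Real.cos (2 * Real.pi * a)) t : ℂ)) s = Gamma s * cosZeta a s := by
  have hc := cos_bounds ha₀ ha₁
  have hopen : IsOpen {s : ℂ | 0 < s.re} := isOpen_lt continuous_const Complex.continuous_re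
  have hA : AnalyticOnNhd ℂ (mellin (fun t => (gker (Real.cos (2 * Real.pi * a)) t : ℂ)))
      {s : ℂ | 0 < s.re} :=
    DifferentiableOn.analyticOnNhd
      (fun z hz => (gker_mellin_props hc hz).2.differentiableWithinAt) hopen
  have hB : AnalyticOnNhd ℂ (fun s => Gamma s * cosZeta a s) {s : ℂ | 0 < s.re} := by
    refine DifferentiableOn.analyticOnNhd (fun z hz => ?_) hopen
    refine DifferentiableAt.differentiableWithinAt (DifferentiableAt.mul ?_ ?_)
    · refine Complex.differentiableAt_Gamma _ (fun m hm => ?_)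
      rw [hm] at hz
      simp at hz
      have : (0 : ℝ) ≤ m := m.cast_nonneg
      linarith
    · exact differentiable_cosZeta_of_ne_zero (circle_ne_zero ha₀ ha₁) z
  refine hA.eqOn_of_preconnected_of_eventuallyEq hB (convex_halfSpace_re_gt 0).isPreconnected
    (z₀ := 2) (by simp) ?_ hs
  have : {s : ℂ | 1 < s.re} ∈ 𝓝 (2 : ℂ) :=
    (isOpen_lt continuous_const Complex.continuous_re).mem_nhds (by simp)
  filter_upwards [this] with z hz
  exact mellin_gker_of_one_lt a hz

/-- For real `s > 0`, `Γ(s) cosZeta a s` is a real integral. -/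
lemma cosZeta_integral {a : ℝ} (ha₀ : 0 < a) (ha₁ : a ≤ 1 / 2) {x : ℝ} (hx : 0 < x) :
    ((Real.Gamma x : ℝ) : ℂ) * cosZeta a x =
      ((∫ t in Ioi (0:ℝ), t ^ (x - 1) * gker (Real.cos (2 * Real.pi * a)) t : ℝ) : ℂ) := by
  rw [← Complex.Gamma_ofReal, ← mellin_gker ha₀ ha₁ (by simpa using hx), mellin,
    ← integral_complex_ofReal]
  refine setIntegral_congr_fun measurableSet_Ioi (fun t ht => ?_)
  simp only [smul_eq_mul, Complex.ofReal_mul]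
  rw [Complex.ofReal_cpow (le_of_lt ht)]
  push_cast
  rfl

lemma cosZeta_real {a : ℝ} (ha₀ : 0 < a) (ha₁ : a ≤ 1 / 2) {x : ℝ} (hx : 0 < x) :
    cosZeta a x = (((cosZeta a x).re : ℝ) : ℂ) := by
  have h := congrArg Complex.im (cosZeta_integral ha₀ ha₁ hx)
  rw [im_ofReal_mul, Complex.ofReal_im] at h
  apply Complex.ext
  · simp
  · have := (Real.Gamma_pos_of_pos hx).ne'
    simp_all

lemma cosZeta_ne_zero {a : ℝ} (ha₀ : 1 / 4 ≤ a) (ha₁ : a ≤ 1 / 2) {x : ℝ} (hx : 0 < x) :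
    cosZeta a x ≠ 0 := by
  intro h0
  have ha : 0 < a := by linarith
  have h := cosZeta_integral ha ha₁ hx
  rw [h0, mul_zero, eq_comm, Complex.ofReal_eq_zero] at h
  have hc := cos_bounds ha ha₁
  have hcn : Real.cos (2 * Real.pi * a) ≤ 0 := by
    apply Real.cos_nonpos_of_pi_div_two_le_of_le <;> nlinarith [Real.pi_pos]
  set c := Real.cos (2 * Real.pi * a)
  have hneg : ∀ t : ℝ, gker c t < 0 := by
    intro t
    have hy := Real.exp_pos (-t)
    have := gker_den_pos hc hy.le
    apply div_neg_of_neg_of_pos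
    · nlinarith
    · linarith [hc.1]
  have hint : IntegrableOn (fun t : ℝ => -(t ^ (x - 1) * gker c t)) (Ioi 0) := by
    have h1 := (gker_mellin_props hc (s := x) (by simpa using hx)).1
    have h2 := h1.re
    refine (IntegrableOn.congr_fun h2 (fun t ht => ?_) measurableSet_Ioi).neg
    have : ((t : ℂ) ^ ((x : ℂ) - 1)) = ((t ^ (x - 1) : ℝ) : ℂ) := by
      rw [Complex.ofReal_cpow (le_of_lt ht)]
      push_cast
      rfl
    simp only [smul_eq_mul, this]
    rw [← Complex.ofReal_mul]
    exact Complex.ofReal_re _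
  have hpos : 0 < ∫ t in Ioi (0:ℝ), -(t ^ (x - 1) * gker c t) := by
    rw [setIntegral_pos_iff_support_of_nonneg_ae _ hint]
    · have : Function.support (fun t : ℝ => -(t ^ (x - 1) * gker c t)) ∩ Ioi 0 = Ioi 0 := by
        apply inter_eq_right.mpr
        intro t ht
        have := Real.rpow_pos_of_pos ht (x - 1)
        simp only [Function.mem_support]
        nlinarith [hneg t]
      rw [this]
      simp
    · refine (ae_restrict_mem measurableSet_Ioi).mono (fun t ht => ?_)
      have := Real.rpow_pos_of_pos ht (x - 1)
      simp only [Pi.zero_apply]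
      nlinarith [hneg t]
  rw [integral_neg, h] at hpos
  simp at hpos

lemma Zf_eq (a : ℝ) (s : ℂ) : Zf a s = 2 * hurwitzZetaEven a s := by
  rw [hurwitzZetaEven_eq, Zf]
  have : (((1 - a : ℝ)) : UnitAddCircle) = -(a : UnitAddCircle) := by
    rw [sub_eq_add_neg, AddCircle.coe_add, AddCircle.coe_neg, AddCircle.coe_period, zero_add]
  rw [this]
  ring

/-- The nonvanishing prefactor in the functional equation. -/
noncomputable def pref (s : ℂ) : ℂ := 4 * (2 * Real.pi) ^ (-(1 - s)) * Gamma (1 - s)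

lemma gamma_cond {s : ℂ} (hs : s.re < 1) (n : ℕ) : 1 - s ≠ -n := by
  intro h
  have := congrArg Complex.re h
  simp at this
  have hn : (0 : ℝ) ≤ n := n.cast_nonneg
  linarith

lemma Zf_fe {a : ℝ} (ha₀ : 0 < a) (ha₁ : a ≤ 1 / 2) {s : ℂ} (hs : s.re < 1) :
    Zf a s = (pref s * cosZeta a (1 - s)) * Complex.cos (Real.pi * (1 - s) / 2) := by
  have := hurwitzZetaEven_one_sub (a : UnitAddCircle) (s := 1 - s) (gamma_cond hs)
    (Or.inl (circle_ne_zero ha₀ ha₁))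
  rw [sub_sub_cancel] at this
  rw [Zf_eq, this, pref]
  ring

lemma pref_ne_zero {s : ℂ} (hs : s.re < 1) : pref s ≠ 0 := by
  unfold pref
  have : (2 * (Real.pi : ℂ)) ≠ 0 := by simp [Real.pi_ne_zero]
  refine mul_ne_zero (mul_ne_zero (by norm_num) ?_) (Complex.Gamma_ne_zero (gamma_cond hs))
  rw [Complex.cpow_ne_zero_iff]
  exact Or.inl this

lemma pref_diff {s : ℂ} (hs : s.re < 1) : DifferentiableAt ℂ pref s := by
  unfold pref
  have h2 : (2 * (Real.pi : ℂ)) ≠ 0 := by simp [Real.pi_ne_zero]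
  have hG : DifferentiableAt ℂ (fun s : ℂ => Gamma (1 - s)) s :=
    DifferentiableAt.comp s (Complex.differentiableAt_Gamma _ (gamma_cond hs)) (by fun_prop)
  refine DifferentiableAt.mul (DifferentiableAt.mul (by fun_prop) ?_) hG
  exact DifferentiableAt.const_cpow (by fun_prop) (Or.inl h2)

/-- Derivative of `Zf` at a zero of the cosine factor. -/
lemma Zf_deriv {a : ℝ} (ha₀ : 0 < a) (ha₁ : a ≤ 1 / 2) {s : ℂ} (hs : s.re < 1)
    (h0 : Complex.cos (Real.pi * (1 - s) / 2) = 0) :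
    deriv (Zf a) s = (pref s * cosZeta a (1 - s)) *
      (Complex.sin (Real.pi * (1 - s) / 2) * (Real.pi / 2)) := by
  have hev : Zf a =ᶠ[𝓝 s] fun s => (pref s * cosZeta a (1 - s)) *
      Complex.cos (Real.pi * (1 - s) / 2) := by
    have : {s : ℂ | s.re < 1} ∈ 𝓝 s :=
      (isOpen_lt Complex.continuous_re continuous_const).mem_nhds hs
    filter_upwards [this] with z hz
    exact Zf_fe ha₀ ha₁ hz
  rw [hev.deriv_eq]
  have hd : DifferentiableAt ℂ (fun s => pref s * cosZeta a (1 - s)) s := by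
    refine (pref_diff hs).mul ?_
    exact DifferentiableAt.comp s
      (differentiable_cosZeta_of_ne_zero (circle_ne_zero ha₀ ha₁) (1 - s)) (by fun_prop)
  have hl : HasDerivAt (fun s : ℂ => Real.pi * (1 - s) / 2) (-(Real.pi / 2 : ℂ)) s := by
    have := (((hasDerivAt_id s).const_sub 1).const_mul (Real.pi : ℂ)).div_const 2
    exact this.congr_deriv (by ring)
  have := (hd.hasDerivAt.mul hl.ccos).deriv
  rw [h0] at this
  refine this.trans ?_
  ring

lemma cos_factor_iff {σ : ℝ} (hσ : σ < 1) :
    Complex.cos (Real.pi * (1 - σ) / 2) = 0 ↔ ∃ n : ℕ, σ = -(2 * n) := by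
  have h : (Real.pi * (1 - σ) / 2 : ℂ) = ((Real.pi * (1 - σ) / 2 : ℝ) : ℂ) := by push_cast; rfl
  rw [h, ← Complex.ofReal_cos, Complex.ofReal_eq_zero, Real.cos_eq_zero_iff]
  have hpi := Real.pi_pos
  constructor
  · rintro ⟨k, hk⟩
    have h1 : 1 - σ = 2 * k + 1 := by
      have : Real.pi * (1 - σ) = Real.pi * (2 * k + 1) := by linarith
      exact mul_left_cancel₀ hpi.ne' this
    have hk0 : 0 ≤ k := by
      have : (-1 : ℝ) < 2 * k := by linarith
      have : (-1 : ℤ) < 2 * k := by exact_mod_cast this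
      omega
    lift k to ℕ using hk0
    refine ⟨k, ?_⟩
    push_cast at h1
    linarith
  · rintro ⟨n, hn⟩
    refine ⟨n, ?_⟩
    rw [hn]
    push_cast
    ring

lemma Zf_ne_zero_of_one_lt {a : ℝ} (ha₀ : 0 < a) {σ : ℝ} (hσ : 1 < σ) : Zf a σ ≠ 0 := by
  rw [Zf_eq]
  have h := Complex.hasSum_re (hasSum_int_hurwitzZetaEven a (s := σ) (by simpa using hσ))
  have hterm : ∀ n : ℤ, (1 / ((|(n : ℝ) + a| : ℝ) : ℂ) ^ (σ : ℂ) / 2).re =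
      1 / |(n : ℝ) + a| ^ σ / 2 := by
    intro n
    rw [← Complex.ofReal_cpow (abs_nonneg _)]
    norm_cast
  simp_rw [hterm] at h
  have h1 : (1 / |((0 : ℤ) : ℝ) + a| ^ σ / 2) ≤ (hurwitzZetaEven a σ).re :=
    le_hasSum h 0 (fun n _ => by positivity)
  have h2 : 0 < (1 / |((0 : ℤ) : ℝ) + a| ^ σ / 2) := by
    simp only [Int.cast_zero, zero_add]
    have : 0 < |a| := abs_pos.mpr ha₀.ne'
    positivity
  intro h3
  have : hurwitzZetaEven a σ = 0 := by simpa using h3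
  rw [this, Complex.zero_re] at h1
  linarith

lemma cosZeta_exists_zero {a : ℝ} (ha₀ : 0 < a) (ha₁ : a < 1 / 4) :
    ∃ x : ℝ, 0 < x ∧ cosZeta a x = 0 := by
  have ha₂ : a ≤ 1 / 2 := by linarith
  have hc : 0 < Real.cos (2 * Real.pi * a) := by
    apply Real.cos_pos_of_mem_Ioo
    constructor <;> nlinarith [Real.pi_pos]
  have hcont : Continuous fun x : ℝ => (cosZeta a x).re :=
    Complex.continuous_re.comp ((differentiable_cosZeta_of_ne_zero
      (circle_ne_zero ha₀ ha₂)).continuous.comp Complex.continuous_ofReal)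
  have hlim : Tendsto (fun x : ℝ => (cosZeta a x).re) atTop
      (𝓝 (Real.cos (2 * Real.pi * a))) := by
    have habs : LSeries.abscissaOfAbsConv
        (fun n : ℕ => ((Real.cos (2 * Real.pi * a * n) : ℝ) : ℂ)) < ⊤ := by
      refine lt_of_le_of_lt (LSeriesSummable.abscissaOfAbsConv_le (s := 2)
        (LSeriesHasSum_cos a (s := 2) (by simp)).LSeriesSummable) ?_
      exact EReal.coe_lt_top _
    have h1 := (Complex.continuous_re.tendsto _).comp (LSeries.tendsto_atTop habs)
    simp only [Nat.cast_one, mul_one, Complex.ofReal_re] at h1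
    refine h1.congr' ?_
    filter_upwards [eventually_gt_atTop 1] with x hx
    simp only [Function.comp]
    rw [(LSeriesHasSum_cos a (s := x) (by simpa using hx)).LSeries_eq]
  obtain ⟨x₁, hx₁, hx₁'⟩ := ((hlim.eventually (lt_mem_nhds hc)).and (eventually_gt_atTop 0)).exists
  have h0 : (cosZeta a ((0 : ℝ) : ℂ)).re < 0 := by
    rw [Complex.ofReal_zero, cosZeta_apply_zero]
    norm_num
  obtain ⟨x, hx, hx0⟩ := intermediate_value_Ioo hx₁'.le hcont.continuousOn ⟨h0, hx₁⟩
  refine ⟨x, hx.1, ?_⟩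
  rw [cosZeta_real ha₀ ha₂ hx.1]
  simpa using hx0

/-- For `0 < a ≤ 1/2`: `1/4 ≤ a ≤ 1/2` iff all real zeros (away from `s = 1`)
of `Z(·,a)` are simple and exactly the non-positive even integers. -/
theorem real_zeros_Z_iff (a : ℝ) (ha₀ : 0 < a) (ha₁ : a ≤ 1 / 2) :
    (1 / 4 ≤ a ∧ a ≤ 1 / 2) ↔
      ∀ σ : ℝ, σ ≠ 1 →
        ((Zf a (σ : ℂ) = 0 ↔ ∃ n : ℕ, σ = -(2 * n)) ∧
         (Zf a (σ : ℂ) = 0 → deriv (Zf a) (σ : ℂ) ≠ 0)) := by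
  constructor
  · rintro ⟨h4, -⟩ σ hσ
    rcases lt_or_gt_of_ne hσ with h | h
    · have hs : (σ : ℂ).re < 1 := by simpa using h
      have hcz : cosZeta a (1 - (σ : ℂ)) ≠ 0 := by
        have := cosZeta_ne_zero h4 ha₁ (x := 1 - σ) (by linarith)
        simpa using this
      have hne := mul_ne_zero (pref_ne_zero hs) hcz
      have hiff : Zf a (σ : ℂ) = 0 ↔ Complex.cos (Real.pi * (1 - σ) / 2) = 0 := by
        rw [Zf_fe ha₀ ha₁ hs, mul_eq_zero, or_iff_right hne]
      refine ⟨hiff.trans (cos_factor_iff h), fun h0 => ?_⟩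
      have hcos := hiff.mp h0
      rw [Zf_deriv ha₀ ha₁ hs hcos]
      refine mul_ne_zero hne (mul_ne_zero (fun hsin => ?_) (by simp [Real.pi_ne_zero]))
      have := Complex.sin_sq_add_cos_sq (Real.pi * (1 - σ) / 2)
      rw [hsin, hcos] at this
      norm_num at this
    · have hne := Zf_ne_zero_of_one_lt ha₀ h
      refine ⟨⟨fun h0 => absurd h0 hne, ?_⟩, fun h0 => absurd h0 hne⟩
      rintro ⟨n, hn⟩
      have : (0 : ℝ) ≤ n := n.cast_nonneg
      linarith
  · intro H
    refine ⟨?_, ha₁⟩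
    by_contra hlt
    obtain ⟨x, hx, hx0⟩ := cosZeta_exists_zero ha₀ (not_le.mp hlt)
    have h1 : 1 - x < 1 := by linarith
    have hs : (((1 - x : ℝ)) : ℂ).re < 1 := by simpa using hx
    have hcz : cosZeta a (1 - ((1 - x : ℝ) : ℂ)) = 0 := by
      simpa using hx0
    obtain ⟨hA, hB⟩ := H (1 - x) h1.ne
    have hZ : Zf a ((1 - x : ℝ) : ℂ) = 0 := by
      rw [Zf_fe ha₀ ha₁ hs, hcz]
      ring
    apply hB hZ
    rw [Zf_deriv ha₀ ha₁ hs ((cos_factor_iff h1).mpr (hA.mp hZ)), hcz]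
    ring
end

section
/- Let 0 < a ≤ 1/2. Then the following are equivalent: (i) 1/4 ≤ a ≤ 1/2; (ii) for every real σ, P(σ,a) = 0 if and only if σ is a negative even integer (σ ∈ {−2, −4, −6, …}), and each of these zeros is simple (the derivative of s ↦ P(s,a) is nonzero there). -/
open HurwitzZeta Complex

/-- `P(s,a) = Li_s(e^{2πia}) + Li_s(e^{2πi(1−a)})`. -/
noncomputable def Pf (a : ℝ) : ℂ → ℂ :=
  fun s => expZeta a s + expZeta (1 - a : ℝ) s

lemma Pf_eq (a : ℝ) : Pf a = fun s => 2 * cosZeta a s := by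
  funext s
  have : ((1 - a : ℝ) : UnitAddCircle) = -(a : UnitAddCircle) := by
    rw [sub_eq_add_neg, AddCircle.coe_add, AddCircle.coe_period, zero_add, AddCircle.coe_neg]
  rw [cosZeta_eq, Pf, this]
  ring

lemma coe_ne {a : ℝ} (h0 : 0 < a) (h1 : a < 1) : (a : UnitAddCircle) ≠ 0 := by
  intro h
  rw [AddCircle.coe_eq_zero_iff] at h
  obtain ⟨n, hn⟩ := h
  simp at hn
  rw [← hn] at h0 h1
  norm_cast at h0 h1
  omega

/-- the kernel `∑ cos(2πna) e^{-nt}` with `c = cos 2πa` -/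
noncomputable def lerKer (c t : ℝ) : ℝ :=
  Real.exp (-t) * ((c - Real.exp (-t)) / (1 - 2 * c * Real.exp (-t) + Real.exp (-t) ^ 2))

lemma ker_den_pos {c : ℝ} (hc : c < 1) (t : ℝ) :
    0 < 1 - 2 * c * Real.exp (-t) + Real.exp (-t) ^ 2 := by
  have := Real.exp_pos (-t)
  nlinarith [sq_nonneg (1 - Real.exp (-t)), mul_pos this (sub_pos.2 hc)]

lemma ker_cont {c : ℝ} (hc : c < 1) : Continuous (lerKer c) := by
  unfold lerKer
  have h : ∀ t, 1 - 2 * c * Real.exp (-t) + Real.exp (-t) ^ 2 ≠ 0 := fun t => (ker_den_pos hc t).ne'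
  fun_prop (disch := exact h _)

lemma cos_lt_one {a : ℝ} (h0 : 0 < a) (h1 : a < 1) : Real.cos (2 * Real.pi * a) < 1 := by
  refine lt_of_le_of_ne (Real.cos_le_one _) fun h => ?_
  have hpi := Real.pi_pos
  rw [Real.cos_eq_one_iff] at h
  obtain ⟨n, hn⟩ := h
  have : (n : ℝ) = a := by
    have : (2 * Real.pi) * (n - a) = 0 := by linarith
    rcases mul_eq_zero.1 this with h | h <;> linarith
  rw [← this] at h0 h1
  norm_cast at h0 h1
  omega

lemma ker_hasSum (a : ℝ) {t : ℝ} (ht : 0 < t) :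
    HasSum (fun n : ℕ => (Real.cos (2 * Real.pi * a * (n + 1)) * Real.exp (-((n : ℝ) + 1) * t)))
      (lerKer (Real.cos (2 * Real.pi * a)) t) := by
  set z : ℂ := cexp ((-t : ℝ) + (2 * Real.pi * a : ℝ) * I) with hz
  have hzre : z.re = Real.exp (-t) * Real.cos (2 * Real.pi * a) := by
    rw [hz, Complex.exp_re]; simp
  have hzim : z.im = Real.exp (-t) * Real.sin (2 * Real.pi * a) := by
    rw [hz, Complex.exp_im]; simp
  have hn : ‖z‖ < 1 := by
    rw [hz, Complex.norm_exp]; simpa using ht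
  have h := (hasSum_geometric_of_norm_lt_one hn).mul_left z
  have h2 := Complex.hasSum_re h
  convert h2 using 1
  · funext n
    rw [← pow_succ', hz, ← Complex.exp_nat_mul, Complex.exp_re]
    simp
    rw [mul_comm]
    congr 2 <;> ring
  · rw [lerKer, ← div_eq_mul_inv, Complex.div_re]
    have hd : normSq (1 - z) = 1 - 2 * Real.cos (2 * Real.pi * a) * Real.exp (-t)
        + Real.exp (-t) ^ 2 := by
      rw [Complex.normSq_apply]
      simp only [sub_re, one_re, sub_im, one_im, hzre, hzim]
      linear_combination Real.exp (-t) ^ 2 * Real.sin_sq_add_cos_sq (2 * Real.pi * a)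
    rw [hd]
    simp only [sub_re, one_re, sub_im, one_im, hzre, hzim]
    rw [← add_div, ← mul_div_assoc]
    congr 1
    linear_combination Real.exp (-t) ^ 2 * Real.sin_sq_add_cos_sq (2 * Real.pi * a)

open Filter Topology Asymptotics Set MeasureTheory

lemma ker_top (c : ℝ) : (fun t => (lerKer c t : ℂ)) =O[atTop] fun t => Real.exp (-1 * t) := by
  rw [← isBigO_norm_left]
  simp only [norm_real]
  rw [isBigO_norm_left]
  unfold lerKer
  have h : Tendsto (fun t : ℝ => Real.exp (-t)) atTop (𝓝 0) :=
    Real.tendsto_exp_neg_atTop_nhds_zero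
  have h2 : Tendsto (fun t : ℝ => ((c - Real.exp (-t)) /
      (1 - 2 * c * Real.exp (-t) + Real.exp (-t) ^ 2))) atTop
      (𝓝 ((c - 0) / (1 - 2 * c * 0 + 0 ^ 2))) := by
    refine (tendsto_const_nhds.sub h).div ((tendsto_const_nhds.sub (h.const_mul _)).add (h.pow 2)) ?_
    norm_num
  have h3 := h2.isBigO_one ℝ
  have h4 := (isBigO_refl (fun t : ℝ => Real.exp (-t)) atTop).mul h3
  simpa using h4

lemma ker_bot {c : ℝ} (hc : c < 1) :
    (fun t => (lerKer c t : ℂ)) =O[𝓝[>] 0] fun t : ℝ => t ^ (-(0 : ℝ)) := by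
  simp only [neg_zero, Real.rpow_zero]
  have : Continuous (fun t => (lerKer c t : ℂ)) := continuous_ofReal.comp (ker_cont hc)
  exact ((this.tendsto 0).mono_left nhdsWithin_le_nhds).isBigO_one ℝ

lemma ker_li {c : ℝ} (hc : c < 1) : LocallyIntegrableOn (fun t => (lerKer c t : ℂ)) (Ioi 0) :=
  ((continuous_ofReal.comp (ker_cont hc)).locallyIntegrable).locallyIntegrableOn _

lemma ker_mellin_big (a : ℝ) {s : ℂ} (hs : 1 < s.re) :
    mellin (fun t => (lerKer (Real.cos (2 * Real.pi * a)) t : ℂ)) s = Gamma s * cosZeta a s := by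
  have h1 := hasSum_mellin (a := fun n : ℕ => ((Real.cos (2 * Real.pi * a * (n + 1)) : ℝ) : ℂ))
    (p := fun n : ℕ => (n : ℝ) + 1) (F := fun t => (lerKer (Real.cos (2 * Real.pi * a)) t : ℂ))
    (s := s) (fun i => Or.inr (by positivity)) (by linarith)
    (fun t ht => by
      have := Complex.hasSum_ofReal.2 (ker_hasSum a ht)
      simpa only [Function.comp_def, ofReal_mul] using this) (by
      have h := (summable_nat_add_iff 1).2 (Real.summable_one_div_nat_rpow.2 hs)
      refine Summable.of_nonneg_of_le (fun n => by positivity) (fun n => ?_) h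
      rw [norm_real, Nat.cast_add, Nat.cast_one]
      gcongr
      exact Real.abs_cos_le_one _)
  have h2 := (hasSum_nat_cosZeta a hs)
  rw [← hasSum_nat_add_iff' 1] at h2
  have hs0 : s ≠ 0 := by rintro rfl; norm_num at hs
  simp [zero_cpow hs0] at h2
  refine h1.unique ?_
  refine (h2.mul_left (Gamma s)).congr_fun fun n => ?_
  push_cast
  ring

lemma ker_mellin {a : ℝ} (h0 : 0 < a) (h1 : a < 1) {s : ℂ} (hs : 0 < s.re) :
    mellin (fun t => (lerKer (Real.cos (2 * Real.pi * a)) t : ℂ)) s = Gamma s * cosZeta a s := by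
  have hc := cos_lt_one h0 h1
  have ho : IsOpen {s : ℂ | 0 < s.re} := isOpen_lt continuous_const continuous_re
  have hA : AnalyticOnNhd ℂ (mellin (fun t => (lerKer (Real.cos (2 * Real.pi * a)) t : ℂ)))
      {s : ℂ | 0 < s.re} := by
    refine DifferentiableOn.analyticOnNhd (fun s hs => ?_) ho
    exact (mellin_differentiableAt_of_isBigO_rpow_exp one_pos (ker_li hc) (ker_top _) (ker_bot hc)
      hs).differentiableWithinAt
  have hB : AnalyticOnNhd ℂ (fun s => Gamma s * cosZeta a s) {s : ℂ | 0 < s.re} := by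
    refine DifferentiableOn.analyticOnNhd (fun s hs => ?_) ho
    refine DifferentiableAt.differentiableWithinAt (DifferentiableAt.mul ?_
      (differentiable_cosZeta_of_ne_zero (coe_ne h0 h1) s))
    refine differentiableAt_Gamma s fun m h => ?_
    have : 0 < s.re := hs
    rw [h] at this
    simp at this
    have : (0:ℝ) ≤ m := by positivity
    linarith
  have hconn : IsPreconnected {s : ℂ | 0 < s.re} := (convex_halfSpace_re_gt 0).isPreconnected
  refine hA.eqOn_of_preconnected_of_eventuallyEq hB hconn (z₀ := 2) (by simp) ?_ hs
  filter_upwards [(isOpen_lt continuous_const continuous_re).mem_nhds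
    (show (1:ℝ) < (2:ℂ).re by norm_num)] with w hw
  exact ker_mellin_big a hw

lemma ker_mellin_real {a : ℝ} (h0 : 0 < a) (h1 : a < 1) {σ : ℝ} (hs : 0 < σ) :
    cosZeta a σ = (((∫ t in Ioi (0:ℝ), t ^ (σ - 1) * lerKer (Real.cos (2 * Real.pi * a)) t) /
      Real.Gamma σ : ℝ) : ℂ) := by
  have h := ker_mellin h0 h1 (s := (σ : ℂ)) (by simpa using hs)
  have hG := (Real.Gamma_pos_of_pos hs).ne'
  rw [Complex.Gamma_ofReal] at h
  have hG' : (Real.Gamma σ : ℂ) ≠ 0 := by exact_mod_cast hG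
  rw [ofReal_div, eq_div_iff hG', mul_comm, ← h, mellin, ← integral_complex_ofReal]
  refine setIntegral_congr_fun measurableSet_Ioi fun t ht => ?_
  simp only [smul_eq_mul, ofReal_mul]
  rw [ofReal_cpow (le_of_lt ht)]
  push_cast
  rfl

lemma cosZeta_ne_pos {a : ℝ} (h0 : 1 / 4 ≤ a) (h1 : a ≤ 1 / 2) {σ : ℝ} (hs : 0 < σ) :
    cosZeta a σ ≠ 0 := by
  have ha0 : 0 < a := by linarith
  have ha1 : a < 1 := by linarith
  have hpi := Real.pi_pos
  have hc1 := cos_lt_one ha0 ha1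
  have hc : Real.cos (2 * Real.pi * a) ≤ 0 := by
    apply Real.cos_nonpos_of_pi_div_two_le_of_le <;> nlinarith
  rw [ker_mellin_real ha0 ha1 hs]
  have hG := (Real.Gamma_pos_of_pos hs)
  set c := Real.cos (2 * Real.pi * a)
  have hconv : MellinConvergent (fun t => (lerKer c t : ℂ)) (σ : ℂ) :=
    mellinConvergent_of_isBigO_rpow_exp one_pos (ker_li hc1) (ker_top _) (ker_bot hc1)
      (by simpa using hs)
  have hint : IntegrableOn (fun t : ℝ => -(t ^ (σ - 1) * lerKer c t)) (Ioi 0) := by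
    have := hconv.re.neg
    refine this.congr ?_
    filter_upwards [ae_restrict_mem measurableSet_Ioi] with t ht
    have : (t : ℂ) ^ ((σ : ℂ) - 1) = ((t ^ (σ - 1) : ℝ) : ℂ) := by
      rw [ofReal_cpow (le_of_lt ht)]; push_cast; rfl
    simp [this]
  have hpos : 0 < ∫ t in Ioi (0:ℝ), -(t ^ (σ - 1) * lerKer c t) := by
    have hp : ∀ t ∈ Ioi (0:ℝ), 0 < -(t ^ (σ - 1) * lerKer c t) := by
      intro t ht
      have h1 := Real.exp_pos (-t)
      have h2 : 0 < t ^ (σ - 1) := Real.rpow_pos_of_pos ht _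
      have h3 : lerKer c t < 0 := mul_neg_of_pos_of_neg h1
        (div_neg_of_neg_of_pos (by linarith) (ker_den_pos hc1 t))
      nlinarith
    rw [setIntegral_pos_iff_support_of_nonneg_ae _ hint]
    · have : Ioi (0:ℝ) ⊆ Function.support (fun t : ℝ => -(t ^ (σ - 1) * lerKer c t)) ∩ Ioi 0 :=
        fun t ht => ⟨(hp t ht).ne', ht⟩
      refine lt_of_lt_of_le ?_ (measure_mono this)
      simp
    · filter_upwards [ae_restrict_mem measurableSet_Ioi] with t ht
      exact (hp t ht).le
  rw [integral_neg] at hpos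
  rw [Ne, ofReal_eq_zero]
  exact (div_neg_of_neg_of_pos (by linarith) hG).ne

lemma hurw_ne {a : ℝ} (h0 : 0 < a) (h1 : a < 1) {σ : ℝ} (hs : 1 < σ) :
    hurwitzZetaEven a σ ≠ 0 := by
  have h := hasSum_nat_hurwitzZetaEven_of_mem_Icc (a := a) ⟨h0.le, h1.le⟩ (s := (σ : ℂ))
    (by simpa using hs)
  have h2 := Complex.hasSum_re h
  have key : ∀ n : ℕ, ((1 / (n + a : ℂ) ^ (σ : ℂ) + 1 / (n + 1 - a : ℂ) ^ (σ : ℂ)) / 2).re =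
      (1 / (n + a) ^ σ + 1 / (n + 1 - a) ^ σ) / 2 := by
    intro n
    have hn : (0:ℝ) ≤ n := by positivity
    rw [show ((1 / (n + a : ℂ) ^ (σ : ℂ) + 1 / (n + 1 - a : ℂ) ^ (σ : ℂ)) / 2) =
      (((1 / (n + a) ^ σ + 1 / (n + 1 - a) ^ σ) / 2 : ℝ) : ℂ) by
        push_cast
        rw [ofReal_cpow (by linarith), ofReal_cpow (by linarith)]
        push_cast
        rfl, ofReal_re]
  have hp : ∀ n : ℕ, 0 < (1 / ((n:ℝ) + a) ^ σ + 1 / ((n:ℝ) + 1 - a) ^ σ) / 2 := by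
    intro n
    have hn : (0:ℝ) ≤ n := by positivity
    have h3 : 0 < ((n:ℝ) + a) ^ σ := Real.rpow_pos_of_pos (by linarith) _
    have h4 : 0 < ((n:ℝ) + 1 - a) ^ σ := Real.rpow_pos_of_pos (by linarith) _
    positivity
  simp only [key] at h2
  have h5 := h2.summable.tsum_pos (fun n => (hp n).le) 0 (hp 0)
  rw [h2.tsum_eq] at h5
  intro h6
  rw [h6] at h5
  simp at h5

/-- nonvanishing factor -/
noncomputable def Gf (a : ℝ) (w : ℂ) : ℂ :=
  2 * (2 * (2 * Real.pi) ^ (-(1 - w)) * Gamma (1 - w) * hurwitzZetaEven a (1 - w))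

lemma Gamma_ok {s : ℂ} (hs : 1 < s.re) (m : ℕ) : s ≠ -m := by
  rintro h
  rw [h] at hs
  simp at hs
  have : (0:ℝ) ≤ m := by positivity
  linarith

lemma Pf_fact (a : ℝ) {w : ℂ} (hw : w.re < 0) :
    Pf a w = Gf a w * Complex.cos (Real.pi * (1 - w) / 2) := by
  have h := cosZeta_one_sub a (s := 1 - w) (fun n h => by
    have : w = n := by linear_combination -h
    rw [this] at hw
    simp at hw
    have : (0:ℝ) ≤ n := by positivity
    linarith)
  rw [sub_sub_cancel] at h
  rw [Pf_eq, Gf]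
  simp only [h]
  ring

lemma Gf_ne {a : ℝ} (h0 : 0 < a) (h1 : a < 1) {σ : ℝ} (hs : σ < 0) : Gf a σ ≠ 0 := by
  have hh := hurw_ne h0 h1 (σ := 1 - σ) (by linarith)
  push_cast at hh
  unfold Gf
  refine mul_ne_zero two_ne_zero (mul_ne_zero (mul_ne_zero (mul_ne_zero two_ne_zero ?_) ?_) hh)
  · rw [cpow_ne_zero_iff]
    left
    simp [Real.pi_ne_zero]
  · exact Gamma_ne_zero (Gamma_ok (by simp; linarith))

lemma Gf_diff (a : ℝ) {σ : ℝ} (hs : σ < 0) : DifferentiableAt ℂ (Gf a) σ := by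
  have hsub : DifferentiableAt ℂ (fun w : ℂ => 1 - w) σ := by fun_prop
  unfold Gf
  refine DifferentiableAt.const_mul (DifferentiableAt.mul (DifferentiableAt.mul
    (DifferentiableAt.const_mul ?_ _) ?_) ?_) _
  · refine DifferentiableAt.const_cpow hsub.neg (Or.inl ?_)
    simp [Real.pi_ne_zero]
  · exact DifferentiableAt.comp (σ : ℂ) (differentiableAt_Gamma _
      (Gamma_ok (by simp; linarith))) hsub
  · refine DifferentiableAt.comp (σ : ℂ) (differentiableAt_hurwitzZetaEven _ ?_) hsub
    intro h
    have : (σ : ℂ) = 0 := by linear_combination -h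
    exact hs.ne (by exact_mod_cast this)

lemma Pf_zero_neg {a : ℝ} (h0 : 0 < a) (h1 : a < 1) {σ : ℝ} (hs : σ < 0)
    (hz : Pf a σ = 0) : ∃ n : ℕ, σ = -(2 * (n + 1)) := by
  rw [Pf_fact a (by simpa using hs)] at hz
  have h := (mul_eq_zero.1 hz).resolve_left (Gf_ne h0 h1 hs)
  have h' : Real.cos (Real.pi * (1 - σ) / 2) = 0 := by exact_mod_cast h
  rw [Real.cos_eq_zero_iff] at h'
  obtain ⟨k, hk⟩ := h'
  have hpi := Real.pi_pos
  have hk2 : σ = -(2 * k) := by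
    have : Real.pi * (1 - σ - (2 * k + 1)) = 0 := by linarith
    rcases mul_eq_zero.1 this with h | h <;> linarith
  have hk3 : 0 < k := by
    rw [hk2] at hs
    have : (0:ℝ) < k := by linarith
    exact_mod_cast this
  obtain ⟨n, rfl⟩ : ∃ n : ℕ, k = n + 1 := ⟨(k - 1).toNat, by omega⟩
  exact ⟨n, by rw [hk2]; push_cast; ring⟩

lemma Pf_zero_triv (a : ℝ) (n : ℕ) : Pf a ((-(2 * (n + 1)) : ℝ) : ℂ) = 0 := by
  rw [Pf_eq]
  have := cosZeta_neg_two_mul_nat_add_one a n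
  simp only
  rw [show ((-(2 * (n + 1)) : ℝ) : ℂ) = -2 * (n + 1) by push_cast; ring, this, mul_zero]

lemma Pf_deriv {a : ℝ} (h0 : 0 < a) (h1 : a < 1) {σ : ℝ} (hs : σ < 0)
    (hz : Pf a σ = 0) : deriv (Pf a) σ ≠ 0 := by
  have hz' := hz
  rw [Pf_fact a (by simpa using hs)] at hz'
  have hG := Gf_ne h0 h1 hs
  have h := (mul_eq_zero.1 hz').resolve_left hG
  have hev : Pf a =ᶠ[𝓝 (σ : ℂ)] fun w => Gf a w * Complex.cos (Real.pi * (1 - w) / 2) := by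
    filter_upwards [(isOpen_lt continuous_re continuous_const).mem_nhds
      (show (σ : ℂ).re < 0 by simpa using hs)] with w hw
    exact Pf_fact a hw
  rw [hev.deriv_eq]
  have hin : HasDerivAt (fun w : ℂ => Real.pi * (1 - w) / 2) (Real.pi * (-1) / 2) (σ : ℂ) :=
    (((hasDerivAt_id (σ : ℂ)).const_sub 1).const_mul _).div_const 2
  have hd := (Gf_diff a hs).hasDerivAt.mul hin.ccos
  rw [show (fun w => Gf a w * Complex.cos (Real.pi * (1 - w) / 2)) =
    (Gf a * fun w => Complex.cos (Real.pi * (1 - w) / 2)) from rfl, hd.deriv, h, mul_zero, zero_add]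
  have hsin : Complex.sin (Real.pi * (1 - σ) / 2) ≠ 0 := by
    intro h'
    have := Complex.sin_sq_add_cos_sq (Real.pi * (1 - σ) / 2)
    rw [h, h'] at this
    norm_num at this
  have hpi : (Real.pi : ℂ) ≠ 0 := by exact_mod_cast Real.pi_ne_zero
  refine mul_ne_zero hG (mul_ne_zero (neg_ne_zero.2 hsin) ?_)
  simp [hpi]

lemma exists_pos_zero {a : ℝ} (h0 : 0 < a) (h1 : a < 1 / 4) : ∃ σ : ℝ, 0 < σ ∧ Pf a σ = 0 := by
  have ha1 : a < 1 := by linarith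
  have hpi := Real.pi_pos
  have hc : 0 < Real.cos (2 * Real.pi * a) := by
    apply Real.cos_pos_of_mem_Ioo
    constructor <;> nlinarith
  have hcont : Continuous fun σ : ℝ => (cosZeta a σ).re :=
    continuous_re.comp ((differentiable_cosZeta_of_ne_zero (coe_ne h0 ha1)).continuous.comp
      continuous_ofReal)
  have hlim : Tendsto (fun σ : ℝ => (cosZeta a σ)) atTop
      (𝓝 ((Real.cos (2 * Real.pi * a * ((1 : ℕ) : ℝ)) : ℝ) : ℂ)) := by
    have := LSeries.tendsto_atTop (f := fun n : ℕ => ((Real.cos (2 * Real.pi * a * n) : ℝ) : ℂ)) (by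
      refine lt_of_le_of_lt (LSeriesSummable.abscissaOfAbsConv_le (s := 2)
        (LSeriesHasSum_cos a (s := 2) (by norm_num)).LSeriesSummable) ?_
      exact EReal.coe_lt_top _)
    refine this.congr' ?_
    filter_upwards [eventually_gt_atTop 1] with σ hσ
    exact (LSeriesHasSum_cos a (s := σ) (by simpa using hσ)).LSeries_eq
  have hlim2 := (continuous_re.tendsto _).comp hlim
  rw [ofReal_re, Nat.cast_one, mul_one] at hlim2
  obtain ⟨S, hS, hS0⟩ := ((hlim2.eventually (lt_mem_nhds hc)).and (eventually_gt_atTop 0)).exists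
  have hz : (cosZeta a ((0 : ℝ) : ℂ)).re < 0 := by
    rw [ofReal_zero, cosZeta_apply_zero]; norm_num
  obtain ⟨σ, hσ, hσ0⟩ := intermediate_value_Ioo hS0.le hcont.continuousOn (show (0:ℝ) ∈ Ioo _ _ from ⟨hz, hS⟩)
  refine ⟨σ, hσ.1, ?_⟩
  rw [Pf_eq]
  simp only at hσ0 ⊢
  rw [ker_mellin_real h0 ha1 hσ.1] at hσ0 ⊢
  rw [ofReal_re] at hσ0
  rw [hσ0]; simp

/-- For `0 < a ≤ 1/2`: `1/4 ≤ a ≤ 1/2` iff all real zeros of `P(·,a)` are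
simple and exactly the negative even integers. -/
theorem real_zeros_P_iff (a : ℝ) (ha₀ : 0 < a) (ha₁ : a ≤ 1 / 2) :
    (1 / 4 ≤ a ∧ a ≤ 1 / 2) ↔
      ∀ σ : ℝ,
        ((Pf a (σ : ℂ) = 0 ↔ ∃ n : ℕ, σ = -(2 * (n + 1))) ∧
         (Pf a (σ : ℂ) = 0 → deriv (Pf a) (σ : ℂ) ≠ 0)) := by
  have h1 : a < 1 := by linarith
  constructor
  · rintro ⟨h4, -⟩ σ
    have hneg : Pf a (σ : ℂ) = 0 → σ < 0 := by
      intro hz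
      by_contra! hσ
      rw [Pf_eq] at hz
      simp only [mul_eq_zero, two_ne_zero, false_or] at hz
      rcases hσ.eq_or_lt with h | h
      · rw [← h, ofReal_zero, cosZeta_apply_zero] at hz
        norm_num at hz
      · exact cosZeta_ne_pos h4 ha₁ h hz
    refine ⟨⟨fun hz => Pf_zero_neg ha₀ h1 (hneg hz) hz, ?_⟩, fun hz => Pf_deriv ha₀ h1 (hneg hz) hz⟩
    rintro ⟨n, rfl⟩
    exact Pf_zero_triv a n
  · intro h
    refine ⟨?_, ha₁⟩
    by_contra! h4
    obtain ⟨σ, hσ, hz⟩ := exists_pos_zero ha₀ h4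
    obtain ⟨n, hn⟩ := (h σ).1.1 hz
    have : (0:ℝ) ≤ n := by positivity
    linarith
end

section
/- Let 0 < a < 1/4. Then Z(σ,a) = 0 for every non-positive even integer σ, and in addition there exists a real number β < 1 with Z(β,a) = 0 such that either β is not a non-positive even integer, or the derivative of s ↦ Z(s,a) also vanishes at β (i.e. β is a zero of multiplicity at least two). -/
open HurwitzZeta Complex

open scoped ComplexConjugate in
lemma cosZeta_conj_aux (a : ℝ) (ha : (a : UnitAddCircle) ≠ 0) (s : ℂ) :
    conj (cosZeta a (conj s)) = cosZeta a s := by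
  have h1 : Differentiable ℂ (cosZeta (a : UnitAddCircle)) :=
    differentiable_cosZeta_of_ne_zero ha
  have h2 : Differentiable ℂ (conj ∘ cosZeta (a : UnitAddCircle) ∘ conj) := by
    intro x
    exact differentiableAt_conj_conj_iff.mpr (h1 _)
  have h3 : (conj ∘ cosZeta (a : UnitAddCircle) ∘ conj) = cosZeta (a : UnitAddCircle) := by
    refine AnalyticOnNhd.eq_of_eventuallyEq (𝕜 := ℂ) (z₀ := 2)
      (fun x _ => h2.analyticAt x) (fun x _ => h1.analyticAt x) ?_
    have ho : IsOpen {z : ℂ | 1 < z.re} := isOpen_lt continuous_const Complex.continuous_re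
    filter_upwards [ho.mem_nhds (by norm_num : (2 : ℂ) ∈ {z : ℂ | 1 < z.re})] with z hz
    have hz' : 1 < (conj z).re := by simpa using hz
    have e1 := hasSum_nat_cosZeta a hz
    have e2 := Complex.hasSum_conj'.mpr (hasSum_nat_cosZeta a hz')
    refine (e2.unique (e1.congr_fun fun n => ?_))
    rw [map_div₀, Complex.conj_ofReal, Complex.cpow_conj, Complex.conj_natCast, Complex.conj_conj]
    rw [Complex.natCast_arg]
    exact Real.pi_pos.ne
  exact congrFun h3 s

lemma exists_cosZeta_zero_aux (a : ℝ) (ha₀ : 0 < a) (ha₁ : a < 1 / 4)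
    (ha : (a : UnitAddCircle) ≠ 0) : ∃ t : ℝ, 0 < t ∧ cosZeta a (t : ℂ) = 0 := by
  have hcont : Continuous fun t : ℝ => (cosZeta (a : UnitAddCircle) (t : ℂ)).re :=
    Complex.continuous_re.comp
      ((differentiable_cosZeta_of_ne_zero ha).continuous.comp Complex.continuous_ofReal)
  have hab : LSeries.abscissaOfAbsConv (fun n : ℕ => ((Real.cos (2 * Real.pi * a * n) : ℝ) : ℂ))
      < ⊤ := by
    refine lt_of_le_of_lt (LSeries.abscissaOfAbsConv_le_of_forall_lt_LSeriesSummable (x := 1)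
      fun y hy => ?_) (EReal.coe_lt_top 1)
    exact (LSeriesHasSum_cos a (s := (y : ℂ)) (by simpa using hy)).LSeriesSummable
  have hlim := LSeries.tendsto_atTop hab
  have hre := (Complex.continuous_re.tendsto _).comp hlim
  have hpos : 0 < Real.cos (2 * Real.pi * a) := by
    have := Real.pi_pos
    apply Real.cos_pos_of_mem_Ioo
    constructor <;> nlinarith
  have hpos' : 0 < (((Real.cos (2 * Real.pi * a * (1 : ℕ)) : ℝ) : ℂ)).re := by
    rw [Complex.ofReal_re]; simpa using hpos
  obtain ⟨M, hM, hM1⟩ := ((hre.eventually (lt_mem_nhds hpos')).and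
    (Filter.eventually_gt_atTop (1 : ℝ))).exists
  have hM2 : 0 < (cosZeta (a : UnitAddCircle) (M : ℂ)).re := by
    rw [← (LSeriesHasSum_cos a (s := (M : ℂ)) (by simpa using hM1)).LSeries_eq]
    exact hM
  have h0 : (cosZeta (a : UnitAddCircle) ((0 : ℝ) : ℂ)).re < 0 := by
    rw [Complex.ofReal_zero, cosZeta_apply_zero]; norm_num
  obtain ⟨t, ht, ht0⟩ := intermediate_value_Icc (by linarith : (0 : ℝ) ≤ M) hcont.continuousOn
    (⟨h0.le, hM2.le⟩ : (0 : ℝ) ∈ Set.Icc _ _)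
  refine ⟨t, lt_of_le_of_ne ht.1 ?_, ?_⟩
  · rintro rfl
    exact h0.ne ht0
  · apply Complex.ext
    · exact ht0
    · have := cosZeta_conj_aux a ha (t : ℂ)
      rw [Complex.conj_ofReal] at this
      simpa using Complex.conj_eq_iff_im.mp this

lemma Zf_eq_aux (a : ℝ) (s : ℂ) : Zf a s = 2 * hurwitzZetaEven (a : UnitAddCircle) s := by
  rw [hurwitzZetaEven_eq, Zf]
  have : ((1 - a : ℝ) : UnitAddCircle) = -(a : UnitAddCircle) := by
    rw [AddCircle.coe_sub, AddCircle.coe_period, zero_sub]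
  rw [this]; ring

/-- For `0 < a < 1/4`, `Z(·,a)` vanishes at every non-positive even integer,
and there is an additional real zero `β < 1`: either `β` is not a non-positive even integer,
or the derivative also vanishes at `β` (a zero of multiplicity at least two). -/
theorem Z_extra_real_zero (a : ℝ) (ha₀ : 0 < a) (ha₁ : a < 1 / 4) :
    (∀ n : ℕ, Zf a ((-(2 * n) : ℝ) : ℂ) = 0) ∧
    ∃ β : ℝ, β < 1 ∧ Zf a (β : ℂ) = 0 ∧
      ((¬ ∃ n : ℕ, β = -(2 * n)) ∨ deriv (Zf a) (β : ℂ) = 0) := by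
  have ha : (a : UnitAddCircle) ≠ 0 := by
    intro h
    rw [AddCircle.coe_eq_zero_iff_of_mem_Ico (a := a) (by constructor <;> linarith)] at h
    exact ha₀.ne' h
  have hG (n : ℕ) : Gammaℝ ((-(2 * n) : ℝ) : ℂ) = 0 :=
    Gammaℝ_eq_zero_iff.mpr ⟨n, by push_cast; ring⟩
  have hZ (s : ℂ) : Zf a s = 2 * (completedHurwitzZetaEven a s * (Gammaℝ s)⁻¹) := by
    rw [Zf_eq_aux, hurwitzZetaEven_def_of_ne_or_ne (Or.inl ha), div_eq_mul_inv]
  refine ⟨fun n => by rw [hZ, hG]; simp, ?_⟩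
  obtain ⟨t, ht, ht0⟩ := exists_cosZeta_zero_aux a ha₀ ha₁ ha
  have htc : (t : ℂ) ≠ 0 := by exact_mod_cast ht.ne'
  have hC : completedHurwitzZetaEven a (((1 - t : ℝ)) : ℂ) = 0 := by
    push_cast
    rw [completedHurwitzZetaEven_one_sub]
    rw [cosZeta, Function.update_of_ne htc, div_eq_zero_iff] at ht0
    exact ht0.resolve_right (Gammaℝ_ne_zero_of_re_pos (by simpa using ht))
  refine ⟨1 - t, by linarith, by rw [hZ, hC]; simp, ?_⟩
  by_cases hn : ∃ n : ℕ, 1 - t = -(2 * n)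
  · right
    obtain ⟨n, hn⟩ := hn
    have h1 : (((1 - t : ℝ)) : ℂ) ≠ 1 := by
      intro h
      have : (1 - t : ℝ) = 1 := by exact_mod_cast h
      linarith
    have d1 := (differentiableAt_completedHurwitzZetaEven (a : UnitAddCircle)
      (Or.inr ha) h1).hasDerivAt
    have d2 := (differentiable_Gammaℝ_inv (((1 - t : ℝ)) : ℂ)).hasDerivAt
    have d3 := (d1.mul d2).const_mul (2 : ℂ)
    rw [funext hZ]
    refine d3.deriv.trans ?_
    rw [hC, hn, hG]
    simp
  · exact Or.inl hn
end

section
/- Let a ∈ {1/6, 1/4, 1/3, 1/2}. Then the Riemann hypothesis holds if and only if every non-real zero s of the function s ↦ Z(s,a) satisfies Re s = 1/2 or Re s = 0; likewise, the Riemann hypothesis holds if and only if every non-real zero s of the function s ↦ P(s,a) satisfies Re s = 1/2 or Re s = 1. -/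
open HurwitzZeta Complex

/-- The Hurwitz sum over residues prime to `N`, in terms of `ζ`. -/
lemma aux_sum (N : ℕ) [NeZero N] {s : ℂ} (hs : s ≠ 1) :
    (N : ℂ) ^ (-s) * ∑ j : ZMod N, (1 : DirichletCharacter ℂ N) j *
      hurwitzZeta (ZMod.toAddCircle j) s
      = (∏ p ∈ N.primeFactors, (1 - (p : ℂ) ^ (-s))) * riemannZeta s :=
  DirichletCharacter.LFunctionTrivChar_eq_mul_riemannZeta hs

lemma factor_re {p : ℕ} (hp : p.Prime) {s : ℂ} (h : 1 - (p : ℂ) ^ (-s) = 0) : s.re = 0 := by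
  have h1 : ‖(p : ℂ) ^ (-s)‖ = 1 := by
    rw [← sub_eq_zero.mp h]; simp
  rw [Complex.norm_natCast_cpow_of_pos hp.pos] at h1
  have hp1 : (1 : ℝ) < p := by exact_mod_cast hp.one_lt
  have h2 := congrArg Real.log h1
  rw [Real.log_rpow (by positivity), Real.log_one, mul_eq_zero] at h2
  simpa [(Real.log_pos hp1).ne'] using h2

/-- The zeta identity at non-real points. -/
lemma Zf_eq_s6 (a : ℝ) (ha : a ∈ ({1 / 6, 1 / 4, 1 / 3, 1 / 2} : Set ℝ)) {s : ℂ}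
    (hs : s.im ≠ 0) : ∃ F : ℂ, (F = 0 → s.re = 0) ∧ Zf a s = F * riemannZeta s := by
  have hs1 : s ≠ 1 := by rintro rfl; simp at hs
  suffices h : ∃ (N : ℕ) (c : ℂ), N ≠ 0 ∧ c ≠ 0 ∧ Zf a s = c * ((N : ℂ) ^ s *
      ((∏ p ∈ N.primeFactors, (1 - (p : ℂ) ^ (-s))) * riemannZeta s)) by
    obtain ⟨N, c, hN, hc, h⟩ := h
    refine ⟨c * (N : ℂ) ^ s * ∏ p ∈ N.primeFactors, (1 - (p : ℂ) ^ (-s)), ?_, ?_⟩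
    · intro h0
      have hNs : (N : ℂ) ^ s ≠ 0 := by simp [Complex.cpow_eq_zero_iff, hN]
      have h1 := (mul_eq_zero.mp h0).resolve_left (mul_ne_zero hc hNs)
      obtain ⟨p, hp, hp0⟩ := Finset.prod_eq_zero_iff.mp h1
      exact factor_re (Nat.prime_of_mem_primeFactors hp) hp0
    · rw [h]; ring
  have key : ∀ (N : ℕ) [NeZero N], (N : ℂ) ^ s * ((∏ p ∈ N.primeFactors, (1 - (p : ℂ) ^ (-s))) *
      riemannZeta s) = ∑ j : ZMod N, (1 : DirichletCharacter ℂ N) j *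
      hurwitzZeta (ZMod.toAddCircle j) s := by
    intro N _
    have hN : (N : ℂ) ≠ 0 := NeZero.ne _
    rw [← aux_sum N hs1, ← mul_assoc, ← Complex.cpow_add _ _ hN]
    simp
  have hcirc : ∀ (N : ℕ) [NeZero N] (k : ℕ) (x : ℝ), x = k / N →
      ZMod.toAddCircle (k : ZMod N) = (x : UnitAddCircle) := by
    rintro N _ k x rfl
    exact ZMod.toAddCircle_natCast k
  have hsum : ∀ (N : ℕ) [NeZero N] (t : Finset (ZMod N)), (∀ j, IsUnit j ↔ j ∈ t) →
      ∑ j : ZMod N, (1 : DirichletCharacter ℂ N) j * hurwitzZeta (ZMod.toAddCircle j) s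
        = ∑ j ∈ t, hurwitzZeta (ZMod.toAddCircle j) s := by
    intro N _ t ht
    rw [← Finset.sum_subset (Finset.subset_univ t)]
    · refine Finset.sum_congr rfl fun j hj => ?_
      rw [MulChar.one_apply ((ht j).2 hj), one_mul]
    · intro j _ hj
      rw [MulChar.map_nonunit _ (fun h => hj ((ht j).1 h)), zero_mul]
  rcases ha with rfl | rfl | rfl | rfl
  · refine ⟨6, 1, by norm_num, by norm_num, ?_⟩
    have h1 := hcirc 6 1 (1 / 6) (by norm_num)
    have h2 := hcirc 6 5 (1 - 1 / 6) (by norm_num)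
    rw [key 6, hsum 6 {((1 : ℕ) : ZMod 6), ((5 : ℕ) : ZMod 6)} (by decide),
      Finset.sum_pair (by decide), h1, h2, one_mul, Zf]
  · refine ⟨4, 1, by norm_num, by norm_num, ?_⟩
    have h1 := hcirc 4 1 (1 / 4) (by norm_num)
    have h2 := hcirc 4 3 (1 - 1 / 4) (by norm_num)
    rw [key 4, hsum 4 {((1 : ℕ) : ZMod 4), ((3 : ℕ) : ZMod 4)} (by decide),
      Finset.sum_pair (by decide), h1, h2, one_mul, Zf]
  · refine ⟨3, 1, by norm_num, by norm_num, ?_⟩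
    have h1 := hcirc 3 1 (1 / 3) (by norm_num)
    have h2 := hcirc 3 2 (1 - 1 / 3) (by norm_num)
    rw [key 3, hsum 3 {((1 : ℕ) : ZMod 3), ((2 : ℕ) : ZMod 3)} (by decide),
      Finset.sum_pair (by decide), h1, h2, one_mul, Zf]
  · refine ⟨2, 2, by norm_num, by norm_num, ?_⟩
    have h1 := hcirc 2 1 (1 / 2) (by norm_num)
    rw [key 2, hsum 2 {((1 : ℕ) : ZMod 2)} (by decide), Finset.sum_singleton, h1, Zf,
      show (1 - 1 / 2 : ℝ) = 1 / 2 by norm_num, two_mul]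

lemma Pf_eq_s6 (a : ℝ) {s F : ℂ} (hs : s.im ≠ 0) (h : Zf a s = F * riemannZeta s) :
    Pf a (1 - s) = F * riemannZeta (1 - s) := by
  have hs1 : s ≠ 1 := by rintro rfl; simp at hs
  have hn : ∀ n : ℕ, s ≠ -n := by rintro n rfl; simp at hs
  have hn1 : ∀ n : ℕ, s ≠ 1 - n := by rintro n rfl; simp at hs
  have hneg : ((1 - a : ℝ) : UnitAddCircle) = -(a : UnitAddCircle) := by
    rw [AddCircle.coe_sub, AddCircle.coe_period, zero_sub]
  rw [riemannZeta_one_sub hn hs1]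
  simp only [Zf, Pf, hneg] at h ⊢
  rw [expZeta_one_sub _ hn1, expZeta_one_sub _ hn1, neg_neg]
  have : F * (2 * (2 * (Real.pi : ℂ)) ^ (-s) * Complex.Gamma s * Complex.cos (Real.pi * s / 2) * riemannZeta s) = (2 * (2 * (Real.pi : ℂ)) ^ (-s) * Complex.Gamma s * Complex.cos (Real.pi * s / 2)) * (F * riemannZeta s) := by ring
  rw [this, ← h, Complex.cos]
  ring_nf

theorem RH_iff_zeros_Z_P (a : ℝ)
    (ha : a ∈ ({1 / 6, 1 / 4, 1 / 3, 1 / 2} : Set ℝ)) :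
    ((∀ s : ℂ, riemannZeta s = 0 → s.im ≠ 0 → s.re = 1 / 2) ↔
      (∀ s : ℂ, Zf a s = 0 → s.im ≠ 0 → (s.re = 1 / 2 ∨ s.re = 0))) ∧
    ((∀ s : ℂ, riemannZeta s = 0 → s.im ≠ 0 → s.re = 1 / 2) ↔
      (∀ s : ℂ, Pf a s = 0 → s.im ≠ 0 → (s.re = 1 / 2 ∨ s.re = 1))) := by
  have hP : ∀ s : ℂ, s.im ≠ 0 → ∃ F : ℂ, (F = 0 → s.re = 1) ∧ Pf a s = F * riemannZeta s := by
    intro s hs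
    have hs' : (1 - s).im ≠ 0 := by simpa using hs
    obtain ⟨F, hF, h⟩ := Zf_eq_s6 a ha hs'
    refine ⟨F, fun h0 => ?_, ?_⟩
    · have := hF h0
      simp at this
      linarith
    · simpa using Pf_eq_s6 a hs' h
  refine ⟨⟨fun H s h0 hs => ?_, fun H s h0 hs => ?_⟩, ⟨fun H s h0 hs => ?_, fun H s h0 hs => ?_⟩⟩
  · obtain ⟨F, hF, h⟩ := Zf_eq_s6 a ha hs
    rw [h] at h0
    rcases mul_eq_zero.mp h0 with h1 | h1
    · exact Or.inr (hF h1)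
    · exact Or.inl (H s h1 hs)
  · obtain ⟨F, hF, h⟩ := Zf_eq_s6 a ha hs
    rcases H s (by rw [h, h0, mul_zero]) hs with h1 | h1
    · exact h1
    · exfalso
      have hs1 : s ≠ 1 := by rintro rfl; simp at hs
      have hn : ∀ n : ℕ, s ≠ -n := by rintro n rfl; simp at hs
      refine riemannZeta_ne_zero_of_one_le_re (s := 1 - s) (by simp [h1]) ?_
      rw [riemannZeta_one_sub hn hs1, h0, mul_zero]
  · obtain ⟨F, hF, h⟩ := hP s hs
    rw [h] at h0
    rcases mul_eq_zero.mp h0 with h1 | h1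
    · exact Or.inr (hF h1)
    · exact Or.inl (H s h1 hs)
  · obtain ⟨F, hF, h⟩ := hP s hs
    rcases H s (by rw [h, h0, mul_zero]) hs with h1 | h1
    · exact h1
    · exact absurd h0 (riemannZeta_ne_zero_of_one_le_re h1.ge)
end

section
/- For all s ∈ ℂ: Y(s,1/6) = (6^s + 3^s) · L(s,χ₋₃), O(s,1/6) = √3 (1 + 2^{1−s}) · L(s,χ₋₃), and X(s,1/6) = (6^s + 3^s + √3(1 + 2^{1−s})) · L(s,χ₋₃). -/
open HurwitzZeta Complex

lemma circle6 (k : ℕ) : ZMod.toAddCircle ((k : ZMod 6)) = (((k : ℝ) / 6 : ℝ) : UnitAddCircle) := by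
  rw [ZMod.toAddCircle_natCast]; norm_num

lemma circle3 (k : ℕ) : ZMod.toAddCircle ((k : ZMod 3)) = (((k : ℝ) / 3 : ℝ) : UnitAddCircle) := by
  rw [ZMod.toAddCircle_natCast]; norm_num

lemma chi_two (χ : DirichletCharacter ℂ 3) (h : χ ≠ 1) : χ 2 = -1 := by
  have h1 : χ 2 * χ 2 = 1 := by
    rw [← map_mul, show (2 : ZMod 3) * 2 = 1 from by decide, map_one]
  rcases mul_self_eq_one_iff.mp h1 with h2 | h2
  · exfalso
    apply h
    ext a
    have ha : (a : ZMod 3) = 1 ∨ (a : ZMod 3) = 2 := by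
      revert a; decide
    rcases ha with ha | ha
    · rw [ha]; simp
    · rw [ha, h2, ← ha, MulChar.one_apply_coe]
  · exact h2

lemma L_three (χ : DirichletCharacter ℂ 3) (h : χ ≠ 1) (s : ℂ) :
    DirichletCharacter.LFunction χ s = (3 : ℂ) ^ (-s) *
      (hurwitzZeta ((1 / 3 : ℝ) : UnitAddCircle) s
        - hurwitzZeta ((2 / 3 : ℝ) : UnitAddCircle) s) := by
  have e1 := circle3 1
  have e2 := circle3 2
  push_cast at e1 e2
  have hs : ∀ f : ZMod 3 → ℂ, ∑ j, f j = f 0 + f 1 + f 2 := fun f => Fin.sum_univ_three f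
  have h0 : χ 0 = 0 := χ.map_nonunit (by decide)
  rw [DirichletCharacter.LFunction, ZMod.LFunction, hs, e1, e2, chi_two χ h, h0, map_one]
  push_cast
  ring

lemma L_six (f : ZMod 6 → ℂ) (s : ℂ) (h0 : f 0 = 0) (h3 : f 3 = 0) :
    ZMod.LFunction f s = (6 : ℂ) ^ (-s) *
      (f 1 * hurwitzZeta ((1 / 6 : ℝ) : UnitAddCircle) s
        + f 2 * hurwitzZeta ((1 / 3 : ℝ) : UnitAddCircle) s
        + f 4 * hurwitzZeta ((2 / 3 : ℝ) : UnitAddCircle) s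
        + f 5 * hurwitzZeta ((5 / 6 : ℝ) : UnitAddCircle) s) := by
  have e1 := circle6 1
  have e2 := circle6 2
  have e4 := circle6 4
  have e5 := circle6 5
  rw [show (((2 : ℕ) : ℝ) / 6) = 1 / 3 by norm_num] at e2
  rw [show (((4 : ℕ) : ℝ) / 6) = 2 / 3 by norm_num] at e4
  push_cast at e1 e2 e4 e5
  have hs : ∀ f : ZMod 6 → ℂ, ∑ j, f j = f 0 + f 1 + f 2 + f 3 + f 4 + f 5 :=
    fun f => Fin.sum_univ_six f
  rw [ZMod.LFunction, hs, e1, e2, e4, e5, h0, h3]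
  push_cast
  ring

lemma Y_aux (χ : DirichletCharacter ℂ 3) (h : χ ≠ 1) (s : ℂ) :
    (6 : ℂ) ^ (-s) * (hurwitzZeta ((1 / 6 : ℝ) : UnitAddCircle) s
        - hurwitzZeta ((5 / 6 : ℝ) : UnitAddCircle) s)
      = DirichletCharacter.LFunction χ s * (1 + (2 : ℂ) ^ (-s)) := by
  have hd : 3 ∣ 6 := by norm_num
  have key := DirichletCharacter.LFunction_changeLevel hd χ (s := s) (Or.inl h)
  have hp : (6 : ℕ).primeFactors = {2, 3} := by
    rw [show (6 : ℕ) = 2 * 3 by norm_num, Nat.primeFactors_mul (by norm_num) (by norm_num),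
      Nat.Prime.primeFactors Nat.prime_two, Nat.Prime.primeFactors Nat.prime_three]
    rfl
  have h0 : χ 0 = 0 := χ.map_nonunit (by decide)
  rw [hp, Finset.prod_pair (by norm_num)] at key
  have c2 : χ ((2 : ℕ) : ZMod 3) = -1 := chi_two χ h
  have c3 : χ ((3 : ℕ) : ZMod 3) = 0 := h0
  rw [c2, c3] at key
  have z : ∀ a : ZMod 6, ¬ IsUnit a → DirichletCharacter.changeLevel hd χ a = 0 :=
    fun a ha => MulChar.map_nonunit _ ha
  have v1 : DirichletCharacter.changeLevel hd χ 1 = 1 := map_one _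
  have v5 : DirichletCharacter.changeLevel hd χ 5 = -1 := by
    have hu : IsUnit (5 : ZMod 6) := by decide
    have hc := DirichletCharacter.changeLevel_eq_cast_of_dvd χ hd hu.unit
    rw [hu.unit_spec, show ((5 : ZMod 6).cast : ZMod 3) = 2 by decide, chi_two χ h] at hc
    exact hc
  rw [DirichletCharacter.LFunction, L_six _ s (z 0 (by decide)) (z 3 (by decide)),
    z 2 (by decide), z 4 (by decide), v1, v5] at key
  push_cast at key
  linear_combination key

lemma std6 (k : ℕ) : ZMod.stdAddChar (k : ZMod 6)
    = (1 / 2 + (Real.sqrt 3 : ℂ) / 2 * I) ^ k := by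
  have h := ZMod.stdAddChar_coe (N := 6) (k : ℤ)
  rw [Int.cast_natCast] at h
  rw [h, show (2 * Real.pi * I * ((k : ℤ) : ℂ) / ((6 : ℕ) : ℂ)) = (k : ℂ) * (((Real.pi / 3 : ℝ) : ℂ) * I)
    by push_cast; ring, Complex.exp_nat_mul, Complex.exp_mul_I, ← Complex.ofReal_cos,
    ← Complex.ofReal_sin, Real.cos_pi_div_three, Real.sin_pi_div_three]
  push_cast
  rfl

lemma O_aux (s : ℂ) :
    -I * (expZeta ((1 / 6 : ℝ) : UnitAddCircle) s - expZeta ((5 / 6 : ℝ) : UnitAddCircle) s)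
      = (Real.sqrt 3 : ℂ) * (6 : ℂ) ^ (-s) *
      (hurwitzZeta ((1 / 6 : ℝ) : UnitAddCircle) s
        + hurwitzZeta ((1 / 3 : ℝ) : UnitAddCircle) s
        - hurwitzZeta ((2 / 3 : ℝ) : UnitAddCircle) s
        - hurwitzZeta ((5 / 6 : ℝ) : UnitAddCircle) s) := by
  have e1 := circle6 1
  have e5 := circle6 5
  push_cast at e1 e5
  have a1 := ZMod.LFunction_stdAddChar_eq_expZeta (1 : ZMod 6) s (Or.inl (by decide))
  have a5 := ZMod.LFunction_stdAddChar_eq_expZeta (5 : ZMod 6) s (Or.inl (by decide))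
  rw [e1] at a1
  rw [e5] at a5
  set w : ℂ := 1 / 2 + (Real.sqrt 3 : ℂ) / 2 * I with hw
  have r3 : (Real.sqrt 3 : ℂ) ^ 2 = 3 := by
    rw [← Complex.ofReal_pow, Real.sq_sqrt (by norm_num)]; norm_num
  have w2 : w ^ 2 = w - 1 := by
    rw [hw]; linear_combination (1 / 4 : ℂ) * I ^ 2 * r3 + (3 / 4 : ℂ) * I_sq
  have w3 : w ^ 3 = -1 := by linear_combination (w + 1) * w2
  have w4 : w ^ 4 = -w := by linear_combination w * w3
  have w5 : w ^ 5 = 1 - w := by linear_combination w ^ 2 * w3 - w2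
  have s0 : ZMod.stdAddChar (0 : ZMod 6) = (1 : ℂ) := by simp
  have s1 : ZMod.stdAddChar (1 : ZMod 6) = w := by
    have := std6 1
    rwa [pow_one, Nat.cast_one] at this
  have s2 : ZMod.stdAddChar (2 : ZMod 6) = w - 1 := (std6 2).trans w2
  have s3 : ZMod.stdAddChar (3 : ZMod 6) = (-1 : ℂ) := (std6 3).trans w3
  have s4 : ZMod.stdAddChar (4 : ZMod 6) = -w := (std6 4).trans w4
  have s5 : ZMod.stdAddChar (5 : ZMod 6) = 1 - w := (std6 5).trans w5
  set F : ZMod 6 → ℂ := fun k => ZMod.stdAddChar (1 * k) - ZMod.stdAddChar (5 * k) with hF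
  have hFL : ZMod.LFunction F s = expZeta ((1 / 6 : ℝ) : UnitAddCircle) s
      - expZeta ((5 / 6 : ℝ) : UnitAddCircle) s := by
    rw [← a1, ← a5]
    simp only [ZMod.LFunction, hF, sub_mul, Finset.sum_sub_distrib, mul_sub]
  have f0 : F 0 = 0 := by simp [hF]
  have f1 : F 1 = 2 * w - 1 := by
    simp only [hF]
    rw [show (1 * 1 : ZMod 6) = 1 by decide, show (5 * 1 : ZMod 6) = 5 by decide, s1, s5]; ring
  have f2 : F 2 = 2 * w - 1 := by
    simp only [hF]
    rw [show (1 * 2 : ZMod 6) = 2 by decide, show (5 * 2 : ZMod 6) = 4 by decide, s2, s4]; ring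
  have f3 : F 3 = 0 := by
    simp only [hF]
    rw [show (1 * 3 : ZMod 6) = 3 by decide, show (5 * 3 : ZMod 6) = 3 by decide]; ring
  have f4 : F 4 = -(2 * w - 1) := by
    simp only [hF]
    rw [show (1 * 4 : ZMod 6) = 4 by decide, show (5 * 4 : ZMod 6) = 2 by decide, s2, s4]; ring
  have f5 : F 5 = -(2 * w - 1) := by
    simp only [hF]
    rw [show (1 * 5 : ZMod 6) = 5 by decide, show (5 * 5 : ZMod 6) = 1 by decide, s1, s5]; ring
  have hv : 2 * w - 1 = (Real.sqrt 3 : ℂ) * I := by rw [hw]; ring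
  rw [← hFL, L_six F s f0 f3, f1, f2, f4, f5, hv]
  linear_combination (-(Real.sqrt 3 : ℂ) * (6 : ℂ) ^ (-s) *
      (hurwitzZeta ((1 / 6 : ℝ) : UnitAddCircle) s
        + hurwitzZeta ((1 / 3 : ℝ) : UnitAddCircle) s
        - hurwitzZeta ((2 / 3 : ℝ) : UnitAddCircle) s
        - hurwitzZeta ((5 / 6 : ℝ) : UnitAddCircle) s)) * I_sq

/-- `Y(s,1/6) = (6^s + 3^s)·L(s,χ₋₃)`, `O(s,1/6) = √3(1 + 2^{1−s})·L(s,χ₋₃)`,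
`X(s,1/6) = (6^s + 3^s + √3(1 + 2^{1−s}))·L(s,χ₋₃)`, where `χ₋₃` is the unique nontrivial
Dirichlet character mod 3. -/
theorem Y_O_X_at_sixth :
    ∀ χ : DirichletCharacter ℂ 3, χ ≠ 1 → ∀ s : ℂ,
      Yf (1 / 6) s = ((6 : ℂ) ^ s + (3 : ℂ) ^ s) * DirichletCharacter.LFunction χ s ∧
      Og (1 / 6) s = (Real.sqrt 3 : ℂ) * (1 + (2 : ℂ) ^ (1 - s)) *
        DirichletCharacter.LFunction χ s ∧
      Xf (1 / 6) s = ((6 : ℂ) ^ s + (3 : ℂ) ^ s +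
          (Real.sqrt 3 : ℂ) * (1 + (2 : ℂ) ^ (1 - s))) *
        DirichletCharacter.LFunction χ s := by
  intro χ h s
  have six : (6 : ℂ) ^ s = (2 : ℂ) ^ s * (3 : ℂ) ^ s := by
    have := Complex.natCast_mul_natCast_cpow 2 3 s
    push_cast at this
    rw [← this]; norm_num
  have n2 : (2 : ℂ) ^ s ≠ 0 := by simp [Complex.cpow_eq_zero_iff]
  have n3 : (3 : ℂ) ^ s ≠ 0 := by simp [Complex.cpow_eq_zero_iff]
  have t2 : (2 : ℂ) ^ (1 - s) = 2 * ((2 : ℂ) ^ s)⁻¹ := by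
    rw [Complex.cpow_sub _ _ two_ne_zero, Complex.cpow_one, div_eq_mul_inv]
  have hL := L_three χ h s
  have hY := Y_aux χ h s
  have hO := O_aux s
  rw [Complex.cpow_neg] at hL hY hO
  rw [Complex.cpow_neg] at hY
  rw [six] at hY hO
  have hY' : Yf (1 / 6) s = ((6 : ℂ) ^ s + (3 : ℂ) ^ s) * DirichletCharacter.LFunction χ s := by
    unfold Yf
    rw [show (1 - 1 / 6 : ℝ) = 5 / 6 by norm_num, six]
    field_simp at hY
    linear_combination hY
  have hO' : Og (1 / 6) s = (Real.sqrt 3 : ℂ) * (1 + (2 : ℂ) ^ (1 - s)) *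
        DirichletCharacter.LFunction χ s := by
    unfold Og
    rw [show (1 - 1 / 6 : ℝ) = 5 / 6 by norm_num, t2, hO]
    rw [mul_inv] at hY ⊢
    linear_combination (Real.sqrt 3 : ℂ) * hY - (Real.sqrt 3 : ℂ) * ((2 : ℂ) ^ s)⁻¹ * hL
  refine ⟨hY', hO', ?_⟩
  unfold Xf
  rw [hY', hO']
  ring
end

section
/- Every complex zero of the function s ↦ 3^s(1 + 2^s) + √3(1 + 2^{1−s}) lies on the vertical line Re s = 1/2; that is, if s ∈ ℂ satisfies 3^s(1 + 2^s) + √3(1 + 2^{1−s}) = 0, then Re s = 1/2. (Equivalently, 6^s + 3^s + √3(1 + 2^{1−s}) = 0 implies Re s = 1/2.) In particular, |(1 + 2^{1−s})/(1 + 2^s)| < 1 whenever Re s > 1/2, = 1 whenever Re s = 1/2, and > 1 whenever Re s < 1/2. -/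
open Complex

/-- The key identity for the squared moduli. -/
lemma aux_key (s : ℂ) : ∃ c : ℝ, 0 < c ∧
    ‖1 + (2 : ℂ) ^ s‖ ^ 2 - ‖1 + (2 : ℂ) ^ (1 - s)‖ ^ 2 = (((2 : ℝ) ^ s.re) ^ 2 - 2) * c := by
  have hn : ‖(2 : ℂ) ^ s‖ = (2 : ℝ) ^ s.re := by
    simpa using Complex.norm_cpow_eq_rpow_re_of_pos (x := 2) (by norm_num) s
  have hw : (2 : ℂ) ^ (1 - s) = 2 / (2 : ℂ) ^ s := by
    rw [Complex.cpow_sub _ _ (by norm_num), Complex.cpow_one]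
  have hz : (2 : ℂ) ^ s ≠ 0 := by simp [Complex.cpow_eq_zero_iff]
  rw [hw, ← hn]
  generalize (2 : ℂ) ^ s = z at *
  have h1 : 1 + 2 / z = (z + 2) / z := by field_simp
  have hp : 0 < ‖z‖ ^ 2 := by positivity
  rw [h1, norm_div, div_pow]
  rw [← Complex.normSq_eq_norm_sq, ← Complex.normSq_eq_norm_sq, ← Complex.normSq_eq_norm_sq] at *
  simp only [Complex.normSq_apply, Complex.add_re, Complex.add_im, Complex.one_re, Complex.one_im,
    Complex.re_ofNat, Complex.im_ofNat] at *
  generalize z.re = a at *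
  generalize z.im = b at *
  refine ⟨((a + 1) ^ 2 + b ^ 2 + 1) / (a * a + b * b), by positivity, ?_⟩
  have hne : a ^ 2 + b ^ 2 ≠ 0 := by nlinarith
  field_simp
  ring

lemma aux_gt (s : ℂ) (h : 1 / 2 < s.re) :
    ‖1 + (2 : ℂ) ^ (1 - s)‖ < ‖1 + (2 : ℂ) ^ s‖ := by
  obtain ⟨c, hc, he⟩ := aux_key s
  have h2 : (2 : ℝ) < ((2 : ℝ) ^ s.re) ^ 2 := by
    rw [← Real.rpow_mul_natCast (by norm_num)]
    calc (2 : ℝ) = 2 ^ (1 : ℝ) := by simp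
      _ < _ := Real.rpow_lt_rpow_of_exponent_lt (by norm_num) (by push_cast; linarith)
  have := mul_pos (sub_pos.2 h2) hc
  exact lt_of_pow_lt_pow_left₀ 2 (norm_nonneg _) (by linarith)

lemma aux_lt (s : ℂ) (h : s.re < 1 / 2) :
    ‖1 + (2 : ℂ) ^ s‖ < ‖1 + (2 : ℂ) ^ (1 - s)‖ := by
  have := aux_gt (1 - s) (by simp only [Complex.sub_re, Complex.one_re]; linarith)
  rwa [sub_sub_cancel] at this

lemma aux_eq (s : ℂ) (h : s.re = 1 / 2) :
    ‖1 + (2 : ℂ) ^ (1 - s)‖ = ‖1 + (2 : ℂ) ^ s‖ := by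
  obtain ⟨c, hc, he⟩ := aux_key s
  have h2 : ((2 : ℝ) ^ s.re) ^ 2 = 2 := by
    rw [← Real.rpow_mul_natCast (by norm_num), h]
    norm_num
  rw [h2, sub_self, zero_mul] at he
  exact (sq_eq_sq₀ (norm_nonneg _) (norm_nonneg _)).1 (by linarith)

lemma aux_zero (s : ℂ) (h : (3 : ℂ) ^ s * (1 + (2 : ℂ) ^ s) +
    (Real.sqrt 3 : ℂ) * (1 + (2 : ℂ) ^ (1 - s)) = 0) : s.re = 1 / 2 := by
  have hn : ‖(3 : ℂ) ^ s‖ = (3 : ℝ) ^ s.re := by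
    simpa using Complex.norm_cpow_eq_rpow_re_of_pos (x := 3) (by norm_num) s
  have h3 := congrArg norm (eq_neg_of_add_eq_zero_left h)
  rw [norm_neg, norm_mul, norm_mul, hn, Complex.norm_real, Real.norm_of_nonneg (Real.sqrt_nonneg _),
    Real.sqrt_eq_rpow] at h3
  have p1 : (0 : ℝ) < 3 ^ s.re := by positivity
  have p2 : (0 : ℝ) < 3 ^ (1 / 2 : ℝ) := by positivity
  rcases lt_trichotomy s.re (1 / 2) with hs | hs | hs
  · exfalso
    have hlt := Real.rpow_lt_rpow_of_exponent_lt (x := 3) (by norm_num) hs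
    exact (mul_lt_mul'' hlt (aux_lt s hs) p1.le (norm_nonneg _)).ne h3
  · exact hs
  · exfalso
    have hlt := Real.rpow_lt_rpow_of_exponent_lt (x := 3) (by norm_num) hs
    exact (mul_lt_mul'' hlt (aux_gt s hs) p2.le (norm_nonneg _)).ne' h3

/-- every complex zero of `s ↦ 3^s(1 + 2^s) + √3(1 + 2^{1−s})`
(equivalently of `s ↦ 6^s + 3^s + √3(1 + 2^{1−s})`) lies on the line `Re s = 1/2`;
moreover `|1 + 2^{1−s}| < |1 + 2^s|` for `Re s > 1/2`, with equality for `Re s = 1/2`,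
and the reverse strict inequality for `Re s < 1/2`. -/
theorem zeros_of_aux_factor_on_critical_line :
    (∀ s : ℂ, (3 : ℂ) ^ s * (1 + (2 : ℂ) ^ s) +
        (Real.sqrt 3 : ℂ) * (1 + (2 : ℂ) ^ (1 - s)) = 0 → s.re = 1 / 2) ∧
    (∀ s : ℂ, (6 : ℂ) ^ s + (3 : ℂ) ^ s +
        (Real.sqrt 3 : ℂ) * (1 + (2 : ℂ) ^ (1 - s)) = 0 → s.re = 1 / 2) ∧
    (∀ s : ℂ, 1 / 2 < s.re → ‖1 + (2 : ℂ) ^ (1 - s)‖ < ‖1 + (2 : ℂ) ^ s‖) ∧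
    (∀ s : ℂ, s.re = 1 / 2 → ‖1 + (2 : ℂ) ^ (1 - s)‖ = ‖1 + (2 : ℂ) ^ s‖) ∧
    (∀ s : ℂ, s.re < 1 / 2 → ‖1 + (2 : ℂ) ^ s‖ < ‖1 + (2 : ℂ) ^ (1 - s)‖) := by
  refine ⟨aux_zero, fun s h => aux_zero s ?_, aux_gt, aux_eq, aux_lt⟩
  have h6 : (6 : ℂ) ^ s = (3 : ℂ) ^ s * (2 : ℂ) ^ s := by
    have := Complex.mul_cpow_ofReal_nonneg (a := 3) (b := 2) (by norm_num) (by norm_num) s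
    rw [← Complex.ofReal_mul] at this
    norm_num at this
    exact this
  rw [← h, h6]
  ring
end

section
/- For all s ∈ ℂ with s ≠ 1: P(s,1/2) = 2(2^{1−s} − 1)ζ(s), P(s,1/3) = (3^{1−s} − 1)ζ(s), P(s,1/4) = 2^{1−s}(2^{1−s} − 1)ζ(s), and P(s,1/6) = (2^{1−s} − 1)(3^{1−s} − 1)ζ(s), where ζ(s) is the Riemann zeta function. In particular, P(1,1/6) = 0. -/
open HurwitzZeta Complex

/-- Sum of the additive characters. -/
lemma sum_char (N : ℕ) (hN : N ≠ 0) (b : ℝ) (n : ℕ) (hn : ¬ N ∣ n) :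
    ∑ j ∈ Finset.range N, cexp (2 * Real.pi * I * (((b + j) / N : ℝ) : ℂ) * n) = 0 := by
  have hp := Complex.isPrimitiveRoot_exp N hN
  have hNC : (N : ℂ) ≠ 0 := by exact_mod_cast hN
  set z := cexp (2 * Real.pi * I / N) with hz
  have h1 : z ^ n ≠ 1 := fun h => hn ((hp.pow_eq_one_iff_dvd n).mp h)
  have h2 : (z ^ n) ^ N = 1 := by rw [← pow_mul, mul_comm, pow_mul, hp.pow_eq_one, one_pow]
  have h3 : ∑ j ∈ Finset.range N, (z ^ n) ^ j = 0 := by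
    rw [geom_sum_eq h1, h2]; simp
  have h4 : ∀ j ∈ Finset.range N, cexp (2 * Real.pi * I * (((b + j) / N : ℝ) : ℂ) * n)
      = cexp (2 * Real.pi * I * b * n / N) * (z ^ n) ^ j := by
    intro j _
    rw [hz, ← Complex.exp_nat_mul, ← Complex.exp_nat_mul, ← Complex.exp_add]
    congr 1
    push_cast
    field_simp
  rw [Finset.sum_congr rfl h4, ← Finset.mul_sum, h3, mul_zero]

lemma sum_char' (N : ℕ) (hN : N ≠ 0) (b : ℝ) (m : ℕ) :
    ∑ j ∈ Finset.range N, cexp (2 * Real.pi * I * (((b + j) / N : ℝ) : ℂ) * (N * m : ℕ))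
      = N * cexp (2 * Real.pi * I * b * m) := by
  have hNC : (N : ℂ) ≠ 0 := by exact_mod_cast hN
  have h4 : ∀ j ∈ Finset.range N,
      cexp (2 * Real.pi * I * (((b + j) / N : ℝ) : ℂ) * (N * m : ℕ))
      = cexp (2 * Real.pi * I * b * m) := by
    intro j _
    have : 2 * Real.pi * I * (((b + j) / N : ℝ) : ℂ) * (N * m : ℕ)
      = 2 * Real.pi * I * b * m + (j * m : ℕ) * (2 * Real.pi * I) := by
      push_cast
      field_simp
    rw [this, Complex.exp_add, Complex.exp_nat_mul_two_pi_mul_I, mul_one]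
  rw [Finset.sum_congr rfl h4]
  simp

/-- Distribution relation in the region of convergence. -/
lemma distr_conv (N : ℕ) (hN : N ≠ 0) (b : ℝ) (s : ℂ) (hs : 1 < s.re) :
    ∑ j ∈ Finset.range N, expZeta ((b + j) / N : ℝ) s = (N : ℂ) ^ (1 - s) * expZeta b s := by
  have hNC : (N : ℂ) ≠ 0 := by exact_mod_cast hN
  have h1 := hasSum_sum (s := Finset.range N)
    (fun j _ => hasSum_expZeta_of_one_lt_re ((b + j) / N : ℝ) hs)
  have h2 := (hasSum_expZeta_of_one_lt_re b hs).mul_left ((N : ℂ) ^ (1 - s))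
  have hinj : Function.Injective (fun m : ℕ => N * m) :=
    fun x y h => Nat.eq_of_mul_eq_mul_left (Nat.pos_of_ne_zero hN) h
  rw [← hinj.hasSum_iff] at h1
  · refine h1.unique ?_
    refine (congrArg (fun f => HasSum f _) (funext fun m => ?_)).mpr h2
    simp only [Function.comp]
    rw [← Finset.sum_div, sum_char' N hN b m, Nat.cast_mul, Complex.natCast_mul_natCast_cpow,
      Complex.cpow_sub _ _ hNC, Complex.cpow_one]
    rw [div_mul_div_comm]
  · intro n hn
    rw [← Finset.sum_div, sum_char N hN b n, zero_div]
    rintro ⟨m, rfl⟩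
    exact hn ⟨m, rfl⟩

/-- Distribution relation for all `s ≠ 1`. -/
lemma distr (N : ℕ) (hN : N ≠ 0) (b : ℝ) (s : ℂ) (hs : s ≠ 1) :
    ∑ j ∈ Finset.range N, expZeta ((b + j) / N : ℝ) s = (N : ℂ) ^ (1 - s) * expZeta b s := by
  have hNC : (N : ℂ) ≠ 0 := by exact_mod_cast hN
  have hU : IsOpen ({1}ᶜ : Set ℂ) := isOpen_compl_singleton
  have hpre : IsPreconnected ({1}ᶜ : Set ℂ) :=
    (isConnected_compl_singleton_of_one_lt_rank (by simp) 1).isPreconnected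
  have hf : AnalyticOnNhd ℂ (fun s => ∑ j ∈ Finset.range N, expZeta ((b + j) / N : ℝ) s)
      ({1}ᶜ : Set ℂ) := by
    refine DifferentiableOn.analyticOnNhd (fun u hu => ?_) hU
    refine DifferentiableAt.differentiableWithinAt ?_
    refine DifferentiableAt.fun_sum fun j _ => ?_
    exact differentiableAt_expZeta _ _ (Or.inl hu)
  have hg : AnalyticOnNhd ℂ (fun s => (N : ℂ) ^ (1 - s) * expZeta b s) ({1}ᶜ : Set ℂ) := by
    refine DifferentiableOn.analyticOnNhd (fun u hu => ?_) hU
    refine DifferentiableAt.differentiableWithinAt ?_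
    refine DifferentiableAt.mul ?_ (differentiableAt_expZeta _ _ (Or.inl hu))
    exact ((differentiableAt_const _).sub differentiableAt_id).const_cpow (Or.inl hNC)
  refine hf.eqOn_of_preconnected_of_eventuallyEq hg hpre (z₀ := 2) (by simp) ?_ hs
  filter_upwards [(isOpen_lt continuous_const continuous_re).mem_nhds
    (show (1 : ℝ) < (2 : ℂ).re by simp)] with u hu
  exact distr_conv N hN b u hu

lemma pf_half (s : ℂ) (hs : s ≠ 1) :
    expZeta (1 / 2 : ℝ) s = ((2 : ℂ) ^ (1 - s) - 1) * riemannZeta s := by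
  have h := distr 2 two_ne_zero 0 s hs
  simp only [Finset.sum_range_succ, Finset.sum_range_zero] at h
  norm_num [expZeta_zero] at h
  norm_num
  linear_combination h

lemma pf_third (s : ℂ) (hs : s ≠ 1) :
    Pf (1 / 3) s = ((3 : ℂ) ^ (1 - s) - 1) * riemannZeta s := by
  have h := distr 3 three_ne_zero 0 s hs
  simp only [Finset.sum_range_succ, Finset.sum_range_zero] at h
  norm_num [expZeta_zero] at h
  norm_num [Pf]
  linear_combination h

lemma pf_quarter (s : ℂ) (hs : s ≠ 1) :
    Pf (1 / 4) s = (2 : ℂ) ^ (1 - s) * ((2 : ℂ) ^ (1 - s) - 1) * riemannZeta s := by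
  have h := distr 2 two_ne_zero (1 / 2) s hs
  rw [pf_half s hs] at h
  simp only [Finset.sum_range_succ, Finset.sum_range_zero] at h
  norm_num at h
  norm_num [Pf]
  linear_combination h

lemma pf_sixth (s : ℂ) (hs : s ≠ 1) :
    Pf (1 / 6) s = ((2 : ℂ) ^ (1 - s) - 1) * Pf (1 / 3) s := by
  have h := distr 2 two_ne_zero (1 / 3) s hs
  have h' := distr 2 two_ne_zero (2 / 3) s hs
  simp only [Finset.sum_range_succ, Finset.sum_range_zero] at h h'
  norm_num at h h'
  norm_num [Pf]
  linear_combination h + h'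

lemma coe_ne_zero_circle (a : ℝ) (h0 : 0 < a) (h1 : a < 1) : ((a : ℝ) : UnitAddCircle) ≠ 0 := by
  intro h
  rw [AddCircle.coe_eq_zero_iff] at h
  obtain ⟨n, hn⟩ := h
  simp only [zsmul_eq_mul, mul_one] at hn
  rw [← hn] at h0 h1
  have h0' : 0 < n := by exact_mod_cast h0
  have h1' : n < 1 := by exact_mod_cast h1
  omega

lemma pf_continuous (a : ℝ) (h0 : 0 < a) (h1 : a < 1) : Continuous (Pf a) := by
  have e1 := differentiable_expZeta_of_ne_zero (coe_ne_zero_circle a h0 h1)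
  have e2 := differentiable_expZeta_of_ne_zero
    (coe_ne_zero_circle (1 - a) (by linarith) (by linarith))
  exact e1.continuous.add e2.continuous

lemma pf_sixth_one : Pf (1 / 6) 1 = 0 := by
  have hc : Continuous fun s : ℂ => ((2 : ℂ) ^ (1 - s) - 1) * Pf (1 / 3) s := by
    refine Continuous.mul (Continuous.sub ?_ continuous_const)
      (pf_continuous _ (by norm_num) (by norm_num))
    exact (continuous_const.sub continuous_id).const_cpow (Or.inl two_ne_zero)
  have h := (pf_continuous (1 / 6) (by norm_num) (by norm_num)).ext_on
    (dense_compl_singleton (1 : ℂ)) hc (fun s hs => pf_sixth s hs)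
  have h1 := congrFun h 1
  simpa using h1

/-- for `s ≠ 1`, `P(s,1/2) = 2(2^{1−s} − 1)ζ(s)`, `P(s,1/3) = (3^{1−s} − 1)ζ(s)`,
`P(s,1/4) = 2^{1−s}(2^{1−s} − 1)ζ(s)`, `P(s,1/6) = (2^{1−s} − 1)(3^{1−s} − 1)ζ(s)`;
in particular `P(1,1/6) = 0`. -/
theorem P_special_values :
    (∀ s : ℂ, s ≠ 1 →
      Pf (1 / 2) s = 2 * ((2 : ℂ) ^ (1 - s) - 1) * riemannZeta s ∧
      Pf (1 / 3) s = ((3 : ℂ) ^ (1 - s) - 1) * riemannZeta s ∧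
      Pf (1 / 4) s = (2 : ℂ) ^ (1 - s) * ((2 : ℂ) ^ (1 - s) - 1) * riemannZeta s ∧
      Pf (1 / 6) s = ((2 : ℂ) ^ (1 - s) - 1) * ((3 : ℂ) ^ (1 - s) - 1) * riemannZeta s) ∧
    Pf (1 / 6) 1 = 0 := by
  refine ⟨fun s hs => ⟨?_, pf_third s hs, pf_quarter s hs, ?_⟩, pf_sixth_one⟩
  · have h := pf_half s hs
    have e : (1 - 1 / 2 : ℝ) = 1 / 2 := by norm_num
    rw [Pf, e, h]
    ring
  · rw [pf_sixth s hs, pf_third s hs]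
    ring
end

section
/- Let 0 < a < 1/4, and set α = −log(cos 2πa) (so α > 0). Then the real-valued function σ ↦ α^{−σ} Γ(σ) P(σ,a) is strictly increasing on the interval (0, ∞). -/
open HurwitzZeta Complex

open MeasureTheory Filter Asymptotics Topology

namespace WeightedP

/-- The kernel whose Mellin transform is `Γ(s) P(s,a)`; here `c = cos 2πa`. -/
noncomputable def ker (c t : ℝ) : ℝ :=
  2 * (c - Real.exp (-t)) * Real.exp (-t) / (1 - 2 * c * Real.exp (-t) + Real.exp (-t) ^ 2)

lemma den_pos {c : ℝ} (hc₀ : 0 < c) (hc : c < 1) (x : ℝ) : 0 < 1 - 2 * c * x + x ^ 2 := by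
  nlinarith [sq_nonneg (x - c)]

lemma den_ge {c : ℝ} (x : ℝ) : 1 - c ^ 2 ≤ 1 - 2 * c * x + x ^ 2 := by
  nlinarith [sq_nonneg (x - c)]

lemma continuous_ker {c : ℝ} (hc₀ : 0 < c) (hc : c < 1) : Continuous (ker c) := by
  unfold ker
  refine Continuous.div (by fun_prop) (by fun_prop) fun t => (den_pos hc₀ hc _).ne'

lemma norm_ker_le {c : ℝ} (hc₀ : 0 < c) (hc : c < 1) {t : ℝ} (ht : 0 ≤ t) :
    ‖ker c t‖ ≤ 2 / (1 - c ^ 2) * Real.exp (-t) := by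
  have hx : Real.exp (-t) ≤ 1 := Real.exp_le_one_iff.2 (by linarith)
  have hx0 := Real.exp_pos (-t)
  have h1 : 0 < 1 - c ^ 2 := by nlinarith
  unfold ker
  rw [norm_div, norm_mul, norm_mul, Real.norm_eq_abs, Real.norm_eq_abs, Real.norm_eq_abs,
    Real.norm_eq_abs, abs_of_pos (den_pos hc₀ hc _), abs_of_pos hx0, abs_two, div_mul_eq_mul_div]
  have h2 : |c - Real.exp (-t)| ≤ 1 := abs_le.2 ⟨by linarith, by linarith⟩
  gcongr
  · linarith
  · exact den_ge _

lemma isBigO_top {c : ℝ} (hc₀ : 0 < c) (hc : c < 1) :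
    (fun t => (ker c t : ℂ)) =O[atTop] fun t => Real.exp (-1 * t) := by
  refine IsBigO.of_bound (2 / (1 - c ^ 2)) ?_
  filter_upwards [eventually_ge_atTop 0] with t ht
  rw [Complex.norm_real, Real.norm_of_nonneg (Real.exp_pos _).le, neg_one_mul]
  exact norm_ker_le hc₀ hc ht

lemma isBigO_bot {c : ℝ} (hc₀ : 0 < c) (hc : c < 1) :
    (fun t => (ker c t : ℂ)) =O[𝓝[>] 0] (fun t : ℝ => t ^ (-(0:ℝ))) := by
  refine IsBigO.of_bound (2 / (1 - c ^ 2)) ?_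
  filter_upwards [self_mem_nhdsWithin] with t ht
  have h1 : 0 < 1 - c ^ 2 := by nlinarith
  have ht : 0 < t := ht
  have hx : Real.exp (-t) ≤ 1 := Real.exp_le_one_iff.2 (by linarith)
  rw [Complex.norm_real]
  simp only [neg_zero, Real.rpow_zero, norm_one, mul_one]
  refine (norm_ker_le hc₀ hc ht.le).trans ?_
  exact mul_le_of_le_one_right (by positivity) hx

lemma locInt {c : ℝ} (hc₀ : 0 < c) (hc : c < 1) :
    LocallyIntegrableOn (fun t => (ker c t : ℂ)) (Set.Ioi 0) := by
  have := continuous_ker hc₀ hc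
  exact (Complex.continuous_ofReal.comp this).locallyIntegrable.locallyIntegrableOn _

lemma mellinConv {c : ℝ} (hc₀ : 0 < c) (hc : c < 1) {s : ℂ} (hs : 0 < s.re) :
    MellinConvergent (fun t => (ker c t : ℂ)) s :=
  mellinConvergent_of_isBigO_rpow_exp one_pos (locInt hc₀ hc) (isBigO_top hc₀ hc)
    (isBigO_bot hc₀ hc) hs

lemma mellinDiff {c : ℝ} (hc₀ : 0 < c) (hc : c < 1) {s : ℂ} (hs : 0 < s.re) :
    DifferentiableAt ℂ (mellin (fun t => (ker c t : ℂ))) s :=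
  mellin_differentiableAt_of_isBigO_rpow_exp one_pos (locInt hc₀ hc) (isBigO_top hc₀ hc)
    (isBigO_bot hc₀ hc) hs

/-- `e^{iθ}`-power coefficients. -/
noncomputable def coef (a : ℝ) (n : ℕ) : ℂ :=
  Complex.exp (2 * Real.pi * I * a) ^ (n + 1) + Complex.exp (-(2 * Real.pi * I * a)) ^ (n + 1)

lemma norm_e (a : ℝ) : ‖Complex.exp (2 * Real.pi * I * a)‖ = 1 := by
  rw [show (2 * Real.pi * I * a : ℂ) = ((2 * Real.pi * a : ℝ) : ℂ) * I by push_cast; ring]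
  exact Complex.norm_exp_ofReal_mul_I _

lemma norm_e' (a : ℝ) : ‖Complex.exp (-(2 * Real.pi * I * a))‖ = 1 := by
  rw [Complex.exp_neg, norm_inv, norm_e, inv_one]

lemma norm_coef (a : ℝ) (n : ℕ) : ‖coef a n‖ ≤ 2 := by
  unfold coef
  refine (norm_add_le _ _).trans ?_
  rw [norm_pow, norm_pow, norm_e, norm_e']
  norm_num

lemma hasSum_ker {a : ℝ} {c : ℝ} (hca : c = Real.cos (2 * Real.pi * a)) (hc₀ : 0 < c) (hc : c < 1)
    {t : ℝ} (ht : t ∈ Set.Ioi 0) :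
    HasSum (fun n : ℕ => coef a n * Real.exp (-((n : ℝ) + 1) * t)) ((ker c t : ℝ) : ℂ) := by
  have ht : 0 < t := ht
  set x := Real.exp (-t) with hx
  have hx0 : 0 < x := Real.exp_pos _
  have hx1 : x < 1 := (by rw [hx]; exact Real.exp_lt_one_iff.2 (by linarith))
  set u := Complex.exp (2 * Real.pi * I * a) with hu
  set v := Complex.exp (-(2 * Real.pi * I * a)) with hv
  have huv : u * v = 1 := by rw [hu, hv, ← Complex.exp_add]; simp
  have huv2 : u + v = 2 * c := by
    rw [hca, hu, hv]
    push_cast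
    rw [Complex.cos]
    rw [show (2 * Real.pi * a : ℂ) * I = 2 * Real.pi * I * a by ring,
      show -(2 * Real.pi * a : ℂ) * I = -(2 * Real.pi * I * a) by ring]
    ring
  have hz : ‖u * x‖ < 1 := by
    rw [norm_mul, norm_e, Complex.norm_real, Real.norm_of_nonneg hx0.le]; linarith
  have hw : ‖v * x‖ < 1 := by
    rw [norm_mul, norm_e', Complex.norm_real, Real.norm_of_nonneg hx0.le]; linarith
  have h1 : (1 : ℂ) - u * x ≠ 0 := fun h => by
    rw [← sub_eq_zero.1 h] at hz; simp at hz
  have h2 : (1 : ℂ) - v * x ≠ 0 := fun h => by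
    rw [← sub_eq_zero.1 h] at hw; simp at hw
  have key := ((hasSum_geometric_of_norm_lt_one hz).mul_left (u * x)).add
    ((hasSum_geometric_of_norm_lt_one hw).mul_left (v * x))
  have hval : ((ker c t : ℝ) : ℂ) = u * x * (1 - u * x)⁻¹ + v * x * (1 - v * x)⁻¹ := by
    have hd : (1 : ℂ) - 2 * c * x + x ^ 2 = (1 - u * x) * (1 - v * x) := by
      rw [← huv2]; linear_combination (-(x:ℂ)^2) * huv
    unfold ker
    rw [← hx]
    push_cast
    rw [hd, ← div_eq_mul_inv, ← div_eq_mul_inv, div_add_div _ _ h1 h2]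
    congr 1
    linear_combination (-x : ℂ) * huv2 + 2 * x ^ 2 * huv
  rw [hval]
  refine key.congr_fun fun n => ?_
  have : Real.exp (-((n : ℝ) + 1) * t) = x ^ (n + 1) := by
    rw [hx, ← Real.exp_nat_mul]; congr 1; push_cast; ring
  rw [this, coef, ← hu, ← hv]
  push_cast
  ring

lemma hasSum_P {a : ℝ} {s : ℂ} (hs : 1 < s.re) :
    HasSum (fun n : ℕ => coef a n / (((n : ℝ) + 1 : ℝ) : ℂ) ^ s) (Pf a s) := by
  have h := (hasSum_expZeta_of_one_lt_re a hs).add (hasSum_expZeta_of_one_lt_re (1 - a) hs)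
  rw [← hasSum_nat_add_iff' 1] at h
  have hs0 : s ≠ 0 := by rintro rfl; simp at hs; linarith
  simp only [Finset.range_one, Finset.sum_singleton, Nat.cast_zero, Complex.zero_cpow hs0,
    div_zero, add_zero, sub_zero] at h
  refine h.congr_fun fun n => ?_
  rw [coef, add_div, ← Complex.exp_nat_mul, ← Complex.exp_nat_mul]
  have : Complex.exp (2 * Real.pi * I * ((1 - a : ℝ) : ℂ) * ((n + 1 : ℕ) : ℂ))
      = Complex.exp (((n + 1 : ℕ) : ℂ) * -(2 * Real.pi * I * a)) := by
    rw [Complex.exp_eq_exp_iff_exists_int]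
    exact ⟨(n + 1 : ℕ), by push_cast; ring⟩
  rw [this]
  push_cast
  congr 3
  ring

lemma mellin_eq_of_one_lt {a : ℝ} {c : ℝ} (hca : c = Real.cos (2 * Real.pi * a)) (hc₀ : 0 < c)
    (hc : c < 1) {s : ℂ} (hs : 1 < s.re) :
    mellin (fun t => (ker c t : ℂ)) s = Complex.Gamma s * Pf a s := by
  have h := hasSum_mellin (a := coef a) (p := fun n : ℕ => (n : ℝ) + 1)
    (F := fun t => (ker c t : ℂ)) (s := s) (fun n => Or.inr (by positivity)) (by linarith)
    (fun t ht => hasSum_ker hca hc₀ hc ht) ?_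
  · refine h.unique (((hasSum_P hs).mul_left (Complex.Gamma s)).congr_fun fun n => ?_)
    rw [mul_div_assoc]
  · have := ((summable_nat_add_iff 1).2 (Real.summable_one_div_nat_rpow.2 hs)).mul_left 2
    refine Summable.of_nonneg_of_le (fun n => by positivity) (fun n => ?_) this
    rw [mul_one_div]
    push_cast
    gcongr
    exact norm_coef a n

lemma coe_ne_zero {a : ℝ} (h0 : 0 < a) (h1 : a < 1) : (a : UnitAddCircle) ≠ 0 := by
  intro h
  rw [AddCircle.coe_eq_zero_iff] at h
  obtain ⟨n, hn⟩ := h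
  simp only [zsmul_eq_mul, mul_one] at hn
  rw [← hn] at h0 h1
  have h0' : (0 : ℤ) < n := by exact_mod_cast h0
  have h1' : n < (1 : ℤ) := by exact_mod_cast h1
  omega

lemma mellin_eq {a : ℝ} (h0 : 0 < a) (h1 : a < 1) {c : ℝ}
    (hca : c = Real.cos (2 * Real.pi * a)) (hc₀ : 0 < c)
    (hc : c < 1) {s : ℂ} (hs : 0 < s.re) :
    mellin (fun t => (ker c t : ℂ)) s = Complex.Gamma s * Pf a s := by
  have hU : IsOpen {s : ℂ | 0 < s.re} := isOpen_lt continuous_const Complex.continuous_re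
  have hPre : IsPreconnected {s : ℂ | 0 < s.re} := (convex_halfSpace_re_gt 0).isPreconnected
  have hf : AnalyticOnNhd ℂ (mellin (fun t => (ker c t : ℂ))) {s : ℂ | 0 < s.re} :=
    DifferentiableOn.analyticOnNhd (fun z hz => (mellinDiff hc₀ hc hz).differentiableWithinAt) hU
  have hg : AnalyticOnNhd ℂ (fun s => Complex.Gamma s * Pf a s) {s : ℂ | 0 < s.re} := by
    refine DifferentiableOn.analyticOnNhd (fun z hz => ?_) hU
    refine DifferentiableAt.differentiableWithinAt (DifferentiableAt.mul ?_ ?_)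
    · refine Complex.differentiableAt_Gamma _ fun m hm => ?_
      have hz : 0 < z.re := hz
      rw [hm] at hz
      simp at hz
      have : (0 : ℝ) ≤ m := m.cast_nonneg
      linarith
    · exact (differentiableAt_expZeta _ _ (Or.inr (coe_ne_zero h0 h1))).add
        (differentiableAt_expZeta _ _ (Or.inr (coe_ne_zero (by linarith) (by linarith))))
  refine hf.eqOn_of_preconnected_of_eventuallyEq hg hPre (z₀ := 2) (by simp) ?_ hs
  have hV : IsOpen {s : ℂ | 1 < s.re} := isOpen_lt continuous_const Complex.continuous_re
  filter_upwards [hV.mem_nhds (show (2 : ℂ) ∈ {s : ℂ | 1 < s.re} by simp)] with z hz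
  exact mellin_eq_of_one_lt hca hc₀ hc hz

lemma integrand_eq (c σ : ℝ) {t : ℝ} (ht : 0 < t) :
    (t : ℂ) ^ ((σ : ℂ) - 1) • (ker c t : ℂ) = ((t ^ (σ - 1) * ker c t : ℝ) : ℂ) := by
  rw [smul_eq_mul]
  push_cast
  rw [Complex.ofReal_cpow ht.le]
  push_cast
  rfl

lemma integrable_real {c : ℝ} (hc₀ : 0 < c) (hc : c < 1) {σ : ℝ} (hσ : 0 < σ) :
    IntegrableOn (fun t : ℝ => t ^ (σ - 1) * ker c t) (Set.Ioi 0) := by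
  have h : MellinConvergent (fun t => (ker c t : ℂ)) (σ : ℂ) := mellinConv hc₀ hc (by simpa)
  have h2 : IntegrableOn (fun t : ℝ => ((t ^ (σ - 1) * ker c t : ℝ) : ℂ)) (Set.Ioi 0) :=
    (integrableOn_congr_fun (fun t ht => integrand_eq c σ ht) measurableSet_Ioi).1 h
  exact h2.re

lemma real_eq {a : ℝ} (h0 : 0 < a) (h1 : a < 1) {c : ℝ}
    (hca : c = Real.cos (2 * Real.pi * a)) (hc₀ : 0 < c)
    (hc : c < 1) {σ : ℝ} (hσ : 0 < σ) :
    Real.Gamma σ * (Pf a (σ : ℂ)).re = ∫ t in Set.Ioi (0 : ℝ), t ^ (σ - 1) * ker c t := by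
  have h := mellin_eq h0 h1 hca hc₀ hc (s := (σ : ℂ)) (by simpa)
  rw [mellin, setIntegral_congr_fun measurableSet_Ioi (fun t ht => integrand_eq c σ ht),
    integral_complex_ofReal, Complex.Gamma_ofReal] at h
  have := congrArg Complex.re h
  rw [Complex.ofReal_re, Complex.re_ofReal_mul] at this
  exact this.symm

lemma pointwise {c α : ℝ} (hc₀ : 0 < c) (hc : c < 1) (hα : α = -Real.log c) (hα0 : 0 < α)
    {σ τ : ℝ} (hστ : σ < τ) {t : ℝ} (ht : 0 < t) (hne : t ≠ α) :
    0 < α ^ (-τ) * (t ^ (τ - 1) * ker c t) - α ^ (-σ) * (t ^ (σ - 1) * ker c t) := by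
  have e : ∀ r : ℝ, α ^ (-r) * (t ^ (r - 1) * ker c t) = (t / α) ^ r * (ker c t / t) := by
    intro r
    rw [Real.div_rpow ht.le hα0.le, Real.rpow_neg hα0.le, Real.rpow_sub_one ht.ne']
    ring
  rw [e, e, ← sub_mul]
  have hce : c = Real.exp (-α) := by rw [hα, neg_neg, Real.exp_log hc₀]
  have hd := den_pos hc₀ hc (Real.exp (-t))
  have hx := Real.exp_pos (-t)
  rcases lt_or_gt_of_ne hne with h | h
  · have h1 : (t / α) ^ τ < (t / α) ^ σ :=
      Real.rpow_lt_rpow_of_exponent_gt (by positivity) ((div_lt_one hα0).2 h) hστ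
    have h2 : c < Real.exp (-t) := by rw [hce]; exact Real.exp_lt_exp.2 (by linarith)
    have h3 : ker c t < 0 := by
      unfold ker
      refine div_neg_of_neg_of_pos (mul_neg_of_neg_of_pos (by linarith) hx) hd
    exact mul_pos_of_neg_of_neg (by linarith) (div_neg_of_neg_of_pos h3 ht)
  · have h1 : (t / α) ^ σ < (t / α) ^ τ :=
      Real.rpow_lt_rpow_of_exponent_lt ((one_lt_div hα0).2 h) hστ
    have h2 : Real.exp (-t) < c := by rw [hce]; exact Real.exp_lt_exp.2 (by linarith)
    have h3 : 0 < ker c t := by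
      unfold ker
      refine div_pos (mul_pos (by linarith) hx) hd
    exact mul_pos (by linarith) (div_pos h3 ht)

end WeightedP

/-- for `0 < a < 1/4` and `α = −log(cos 2πa)` (which is positive), the
real-valued function `σ ↦ α^{−σ} Γ(σ) P(σ,a)` is strictly increasing on `(0,∞)`. -/
theorem strictMono_weighted_P (a : ℝ) (ha₀ : 0 < a) (ha₁ : a < 1 / 4) :
    0 < -Real.log (Real.cos (2 * Real.pi * a)) ∧
    StrictMonoOn
      (fun σ : ℝ =>
        (-Real.log (Real.cos (2 * Real.pi * a))) ^ (-σ) * Real.Gamma σ *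
          (Pf a (σ : ℂ)).re)
      (Set.Ioi 0) := by
  set c := Real.cos (2 * Real.pi * a) with hca
  have hpi := Real.pi_pos
  have hc₀ : 0 < c := Real.cos_pos_of_mem_Ioo ⟨by nlinarith, by nlinarith⟩
  have hc : c < 1 := by
    rw [hca, ← Real.cos_zero]
    exact Real.cos_lt_cos_of_nonneg_of_le_pi le_rfl (by nlinarith) (by positivity)
  have hα0 : 0 < -Real.log c := by linarith [Real.log_neg hc₀ hc]
  refine ⟨hα0, fun σ hσ τ hτ hστ => ?_⟩
  have hσ : 0 < σ := hσ
  have hτ : 0 < τ := hτ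
  simp only [mul_assoc]
  rw [WeightedP.real_eq ha₀ (by linarith) hca hc₀ hc hσ,
    WeightedP.real_eq ha₀ (by linarith) hca hc₀ hc hτ, ← sub_pos,
    ← integral_const_mul, ← integral_const_mul]
  have i1 := (WeightedP.integrable_real hc₀ hc hσ).const_mul ((-Real.log c) ^ (-σ))
  have i2 := (WeightedP.integrable_real hc₀ hc hτ).const_mul ((-Real.log c) ^ (-τ))
  rw [← integral_sub i2 i1]
  have hpt := fun (t : ℝ) (ht : 0 < t) (hne : t ≠ -Real.log c) =>
    WeightedP.pointwise hc₀ hc rfl hα0 hστ ht hne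
  rw [setIntegral_pos_iff_support_of_nonneg_ae]
  · refine lt_of_lt_of_le ?_ (measure_mono (s := Set.Ioo 0 (-Real.log c)) ?_)
    · simpa using hα0
    · intro t ht
      exact ⟨(hpt t ht.1 ht.2.ne).ne', ht.1⟩
  · have hn : ∀ᵐ t : ℝ ∂(volume.restrict (Set.Ioi 0)), t ≠ -Real.log c :=
      ae_restrict_of_ae (Measure.ae_ne volume _)
    filter_upwards [ae_restrict_mem measurableSet_Ioi, hn] with t ht hne
    exact (hpt t ht hne).le
  · exact i2.sub i1
end
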